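/- arXiv:2005.08155 — 17 statements merged into one kernel-verified Lean document; each statement's English description precedes it below -/
import Mathlib

section
/- Let m ≥ 2 and let f : ℝ_{≥0}^{m−1} → ℝ be convex and continuous on the nonnegative orthant. Define f*(s) = sup_{t ∈ ℝ_{≥0}^{m−1}} (⟨s, t⟩ − f(t)) ∈ ℝ ∪ {+∞} for s ∈ ℝ^{m−1}, and dom(f*) = {s ∈ ℝ^{m−1} : f*(s) < +∞}. Define the loss L_f on {1,…,m} × dom(f*) by L_f(j, s) = −s_j for j ∈ {1,…,m−1} and L_f(m, s) = f*(s). Then: (a) dom(f*) is convex and, for each j, the map s ↦ L_f(j, s) is convex on dom(f*); (b) for every η ∈ Δ_m with η_m > 0, inf_{s ∈ dom(f*)} Σ_{j=1}^m η_j L_f(j, s) = −η_m · f(η_1/η_m, …, η_{m−1}/η_m). -/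
open Finset

/-- The set of values `⟨s,t⟩ - f t` for `t` in the nonnegative orthant. -/
def conjVals (d : ℕ) (f : (Fin d → ℝ) → ℝ) (s : Fin d → ℝ) : Set ℝ :=
  {x : ℝ | ∃ t : Fin d → ℝ, (∀ i, 0 ≤ t i) ∧ x = ∑ i, s i * t i - f t}

/-- `dom(f*) = {s : f*(s) < ∞}`, expressed as boundedness of the value set. -/
def conjDom (d : ℕ) (f : (Fin d → ℝ) → ℝ) : Set (Fin d → ℝ) :=
  {s | BddAbove (conjVals d f s)}

/-- `f*(s) = sup_{t ≥ 0} (⟨s,t⟩ - f t)`. -/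
noncomputable def conj (d : ℕ) (f : (Fin d → ℝ) → ℝ) (s : Fin d → ℝ) : ℝ :=
  sSup (conjVals d f s)

/-- The loss `L_f`: `L_f(j,s) = -s_j` for `j ≤ m-1`, `L_f(m,s) = f*(s)`. -/
noncomputable def Lf (d : ℕ) (f : (Fin d → ℝ) → ℝ) (j : Fin (d + 1))
    (s : Fin d → ℝ) : ℝ :=
  Fin.lastCases (conj d f s) (fun i => -s i) j

lemma le_conj_aux {d : ℕ} {f : (Fin d → ℝ) → ℝ} {s : Fin d → ℝ} (hs : s ∈ conjDom d f)
    {t : Fin d → ℝ} (ht : ∀ i, 0 ≤ t i) : ∑ i, s i * t i - f t ≤ conj d f s :=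
  le_csSup hs ⟨t, ht, rfl⟩

lemma conj_le_aux {d : ℕ} {f : (Fin d → ℝ) → ℝ} {s : Fin d → ℝ} {c : ℝ}
    (h : ∀ t : Fin d → ℝ, (∀ i, 0 ≤ t i) → ∑ i, s i * t i - f t ≤ c) :
    s ∈ conjDom d f ∧ conj d f s ≤ c := by
  have hub : c ∈ upperBounds (conjVals d f s) := by
    rintro x ⟨t, ht, rfl⟩
    exact h t ht
  exact ⟨⟨c, hub⟩, csSup_le ⟨_, 0, fun i => le_rfl, rfl⟩ hub⟩

lemma conv_aux {d : ℕ} {f : (Fin d → ℝ) → ℝ} {x y : Fin d → ℝ} (hx : x ∈ conjDom d f)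
    (hy : y ∈ conjDom d f) {a b : ℝ} (ha : 0 ≤ a) (hb : 0 ≤ b) (hab : a + b = 1) :
    a • x + b • y ∈ conjDom d f ∧
      conj d f (a • x + b • y) ≤ a * conj d f x + b * conj d f y := by
  apply conj_le_aux
  intro t ht
  have h1 := mul_le_mul_of_nonneg_left (le_conj_aux hx ht) ha
  have h2 := mul_le_mul_of_nonneg_left (le_conj_aux hy ht) hb
  have h3 : ∑ i, (a • x + b • y) i * t i = a * ∑ i, x i * t i + b * ∑ i, y i * t i := by
    rw [Finset.mul_sum, Finset.mul_sum, ← Finset.sum_add_distrib]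
    refine Finset.sum_congr rfl fun i _ => ?_
    simp only [Pi.add_apply, Pi.smul_apply, smul_eq_mul]
    ring
  have h4 : f t = a * f t + b * f t := by rw [← add_mul, hab, one_mul]
  rw [h3]
  linarith

theorem stmt1 (d : ℕ) (hd : 1 ≤ d) (f : (Fin d → ℝ) → ℝ)
    (hf : ConvexOn ℝ {t : Fin d → ℝ | ∀ i, 0 ≤ t i} f)
    (hfc : ContinuousOn f {t : Fin d → ℝ | ∀ i, 0 ≤ t i}) :
    -- (a) dom(f*) is convex and each L_f(j, ·) is convex on it
    (Convex ℝ (conjDom d f) ∧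
      ∀ j : Fin (d + 1), ConvexOn ℝ (conjDom d f) (Lf d f j))
    ∧
    -- (b) inf over dom(f*) of the risk equals -η_m f(η_1/η_m, …, η_{m-1}/η_m)
    (∀ η : Fin (d + 1) → ℝ, (∀ j, 0 ≤ η j) → ∑ j, η j = 1 →
      0 < η (Fin.last d) →
      IsGLB {x : ℝ | ∃ s ∈ conjDom d f, x = ∑ j, η j * Lf d f j s}
        (-η (Fin.last d) * f (fun i => η i.castSucc / η (Fin.last d)))) := by
  have hcv : Convex ℝ (conjDom d f) := fun x hx y hy a b ha hb hab =>
    (conv_aux hx hy ha hb hab).1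
  refine ⟨⟨hcv, fun j => ⟨hcv, fun x hx y hy a b ha hb hab => ?_⟩⟩, ?_⟩
  · induction j using Fin.lastCases with
    | last => simpa [Lf] using (conv_aux hx hy ha hb hab).2
    | cast i =>
      simp only [Lf, Fin.lastCases_castSucc, Pi.add_apply, Pi.smul_apply, smul_eq_mul]
      linarith
  · intro η hη _ hpos
    set p := η (Fin.last d) with hp
    set t0 : Fin d → ℝ := fun i => η i.castSucc / p with ht0
    have ht0n : ∀ i, 0 ≤ t0 i := fun i => div_nonneg (hη _) hpos.le
    have hsum : ∀ s, ∑ j, η j * Lf d f j s = p * (conj d f s - ∑ i, s i * t0 i) := by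
      intro s
      rw [Fin.sum_univ_castSucc, mul_sub, Finset.mul_sum]
      simp only [Lf, Fin.lastCases_castSucc, Fin.lastCases_last, ← hp]
      have : ∀ i, p * (s i * t0 i) = s i * η i.castSucc := by
        intro i
        simp only [ht0]
        field_simp
      simp only [this]
      rw [add_comm, sub_eq_add_neg, ← Finset.sum_neg_distrib]
      congr 1
      refine Finset.sum_congr rfl fun i _ => ?_
      ring
    constructor
    · rintro x ⟨s, hs, rfl⟩
      rw [hsum]
      have := mul_le_mul_of_nonneg_left (le_conj_aux hs ht0n) hpos.le
      nlinarith
    · intro b hb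
      have key : ∀ a, a < f t0 → b ≤ -p * a := by
        intro a ha
        have hcl : IsClosed {t : Fin d → ℝ | ∀ i, 0 ≤ t i} := by
          simp only [Set.ofPred_forall]
          exact isClosed_iInter fun i => isClosed_le continuous_const (continuous_apply i)
        obtain ⟨l, c, hle, heq⟩ := ConvexOn.exists_affine_le_of_lt (𝕜 := ℝ)
          (x := t0) (s := {t : Fin d → ℝ | ∀ i, 0 ≤ t i}) ht0n ha hcl hfc.lowerSemicontinuousOn hf
        have hl : ∀ t : Fin d → ℝ, l t = ∑ i, l (Pi.single i 1) * t i := by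
          intro t
          conv_lhs => rw [pi_eq_sum_univ' t]
          rw [map_sum]
          refine Finset.sum_congr rfl fun i _ => ?_
          rw [map_smul, smul_eq_mul, mul_comm]
        obtain ⟨h1, h2⟩ := conj_le_aux (d := d) (f := f) (s := fun i => l (Pi.single i 1))
          (c := -c) (by
            intro t ht
            have h := hle ⟨t, ht⟩
            rw [← hl]
            simp at h
            linarith)
        have h3 := hb ⟨_, h1, rfl⟩
        rw [hsum, ← hl] at h3
        simp at heq
        have h4 := mul_le_mul_of_nonneg_left h2 hpos.le
        nlinarith
      have : f t0 ≤ -b / p := by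
        refine le_of_forall_lt fun a ha => ?_
        obtain ⟨a', h1, h2⟩ := exists_between ha
        refine lt_of_lt_of_le h1 ?_
        rw [le_div_iff₀ hpos]
        nlinarith [key a' h2]
      rw [le_div_iff₀ hpos] at this
      linarith
end

section
/- Let m ≥ 2, let f : ℝ_{≥0}^{m−1} → ℝ be convex, and let g : ℝ_{≥0}^{m−1} → ℝ^{m−1} be a subgradient selection for f, i.e. f(v) ≥ f(u) + ⟨g(u), v − u⟩ for all u, v ∈ ℝ_{≥0}^{m−1}. Define the loss L_{f2}(j, u) = −g_j(u) for j ∈ {1,…,m−1} and L_{f2}(m, u) = ⟨u, g(u)⟩ − f(u), for u ∈ ℝ_{≥0}^{m−1}. Then for every η ∈ Δ_m with η_m > 0, inf_{u ∈ ℝ_{≥0}^{m−1}} Σ_{j=1}^m η_j L_{f2}(j, u) = −η_m · f(η_1/η_m, …, η_{m−1}/η_m), and the infimum is attained at u = (η_1/η_m, …, η_{m−1}/η_m). -/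
open Finset

/-- The loss `L_{f2}`: `L_{f2}(j,u) = -g_j(u)` for `j ≤ m-1`,
`L_{f2}(m,u) = ⟨u, g(u)⟩ - f(u)`. -/
noncomputable def Lf2 (d : ℕ) (f : (Fin d → ℝ) → ℝ) (g : (Fin d → ℝ) → Fin d → ℝ)
    (j : Fin (d + 1)) (u : Fin d → ℝ) : ℝ :=
  Fin.lastCases (∑ i, u i * g u i - f u) (fun i => -g u i) j

theorem stmt2 (d : ℕ) (hd : 1 ≤ d) (f : (Fin d → ℝ) → ℝ)
    (hf : ConvexOn ℝ {t : Fin d → ℝ | ∀ i, 0 ≤ t i} f)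
    (g : (Fin d → ℝ) → Fin d → ℝ)
    (hg : ∀ u v : Fin d → ℝ, (∀ i, 0 ≤ u i) → (∀ i, 0 ≤ v i) →
      f u + ∑ i, g u i * (v i - u i) ≤ f v)
    (η : Fin (d + 1) → ℝ) (hη0 : ∀ j, 0 ≤ η j) (hη1 : ∑ j, η j = 1)
    (hηm : 0 < η (Fin.last d)) :
    -- the value -η_m f(u^η) is a lower bound of the risk over the orthant …
    (∀ u : Fin d → ℝ, (∀ i, 0 ≤ u i) →
      -η (Fin.last d) * f (fun i => η i.castSucc / η (Fin.last d)) ≤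
        ∑ j, η j * Lf2 d f g j u)
    ∧
    -- … and it is attained at u = u^η = (η_1/η_m, …, η_{m-1}/η_m)
    (∑ j, η j * Lf2 d f g j (fun i => η i.castSucc / η (Fin.last d)) =
      -η (Fin.last d) * f (fun i => η i.castSucc / η (Fin.last d))) := by
  have key : ∀ u : Fin d → ℝ, ∑ j, η j * Lf2 d f g j u =
      -η (Fin.last d) *
        (f u + ∑ i, g u i * ((fun i : Fin d => η i.castSucc / η (Fin.last d)) i - u i)) := by
    intro u
    have h : ∀ i : Fin d, η i.castSucc * -g u i =
        -η (Fin.last d) * (g u i * (η i.castSucc / η (Fin.last d) - u i))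
          - η (Fin.last d) * (u i * g u i) := by
      intro i
      field_simp
      ring
    rw [Fin.sum_univ_castSucc]
    simp only [Lf2, Fin.lastCases_castSucc, Fin.lastCases_last]
    rw [Finset.sum_congr rfl (fun i _ => h i), Finset.sum_sub_distrib, ← Finset.mul_sum,
      ← Finset.mul_sum]
    ring
  refine ⟨fun u hu => ?_, ?_⟩
  · rw [key u]
    have h1 := hg u (fun i => η i.castSucc / η (Fin.last d)) hu
      (fun i => div_nonneg (hη0 _) hηm.le)
    exact mul_le_mul_of_nonpos_left h1 (by linarith)
  · rw [key]
    simp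
end

section
/- Let m ≥ 2, let f : ℝ_{≥0}^{m−1} → ℝ be convex, and let g : ℝ_{≥0}^{m−1} → ℝ^{m−1} satisfy f(v) ≥ f(u) + ⟨g(u), v − u⟩ for all u, v ∈ ℝ_{≥0}^{m−1}. For q ∈ Δ_m with q_m > 0 set u^q = (q_1/q_m, …, q_{m−1}/q_m), and define L_{f3}(j, q) = −g_j(u^q) for j ∈ {1,…,m−1} and L_{f3}(m, q) = ⟨u^q, g(u^q)⟩ − f(u^q). Then L_{f3} is a proper scoring rule whose generalized entropy is H_f: for every η ∈ Δ_m with η_m > 0, inf over q ∈ Δ_m with q_m > 0 of Σ_{j=1}^m η_j L_{f3}(j, q) equals −η_m · f(u^η), which in turn equals Σ_{j=1}^m η_j L_{f3}(j, η). -/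
open Finset

/-- The ratio vector `u^q = (q_1/q_m, …, q_{m-1}/q_m)`. -/
noncomputable def uRatio (d : ℕ) (q : Fin (d + 1) → ℝ) : Fin d → ℝ :=
  fun i => q i.castSucc / q (Fin.last d)

/-- The scoring rule `L_{f3}`: `L_{f3}(j,q) = -g_j(u^q)` for `j ≤ m-1`,
`L_{f3}(m,q) = ⟨u^q, g(u^q)⟩ - f(u^q)`. -/
noncomputable def Lf3 (d : ℕ) (f : (Fin d → ℝ) → ℝ) (g : (Fin d → ℝ) → Fin d → ℝ)
    (j : Fin (d + 1)) (q : Fin (d + 1) → ℝ) : ℝ :=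
  Fin.lastCases (∑ i, uRatio d q i * g (uRatio d q) i - f (uRatio d q))
    (fun i => -g (uRatio d q) i) j

theorem key_aux (d : ℕ) (f : (Fin d → ℝ) → ℝ) (g : (Fin d → ℝ) → Fin d → ℝ)
    (η q : Fin (d + 1) → ℝ) (hηm : 0 < η (Fin.last d)) :
    ∑ j, η j * Lf3 d f g j q = -η (Fin.last d) *
      (f (uRatio d q) + ∑ i, g (uRatio d q) i * (uRatio d η i - uRatio d q i)) := by
  have h : ∀ i : Fin d, η i.castSucc = η (Fin.last d) * uRatio d η i := by
    intro i
    unfold uRatio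
    field_simp
  rw [Fin.sum_univ_castSucc]
  simp only [Lf3, Fin.lastCases_castSucc, Fin.lastCases_last, h]
  generalize uRatio d q = u
  generalize uRatio d η = v
  have h1 : ∑ i, η (Fin.last d) * v i * -g u i = -η (Fin.last d) * ∑ i, g u i * v i := by
    rw [Finset.mul_sum]
    exact Finset.sum_congr rfl fun i _ => by ring
  have h2 : ∑ i, u i * g u i = ∑ i, g u i * u i :=
    Finset.sum_congr rfl fun i _ => by ring
  simp only [mul_sub, Finset.sum_sub_distrib] at *
  rw [h1, h2]
  ring

theorem stmt3 (d : ℕ) (hd : 1 ≤ d) (f : (Fin d → ℝ) → ℝ)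
    (hf : ConvexOn ℝ {t : Fin d → ℝ | ∀ i, 0 ≤ t i} f)
    (g : (Fin d → ℝ) → Fin d → ℝ)
    (hg : ∀ u v : Fin d → ℝ, (∀ i, 0 ≤ u i) → (∀ i, 0 ≤ v i) →
      f u + ∑ i, g u i * (v i - u i) ≤ f v)
    (η : Fin (d + 1) → ℝ) (hη0 : ∀ j, 0 ≤ η j) (hη1 : ∑ j, η j = 1)
    (hηm : 0 < η (Fin.last d)) :
    -- -η_m f(u^η) is a lower bound of the expected loss over q ∈ Δ_m, q_m > 0 …
    (∀ q : Fin (d + 1) → ℝ, (∀ j, 0 ≤ q j) → ∑ j, q j = 1 →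
      0 < q (Fin.last d) →
      -η (Fin.last d) * f (uRatio d η) ≤ ∑ j, η j * Lf3 d f g j q)
    ∧
    -- … and it is attained at q = η (properness, entropy = H_f(η))
    (∑ j, η j * Lf3 d f g j η = -η (Fin.last d) * f (uRatio d η)) := by
  refine ⟨fun q hq0 _ hqm => ?_, ?_⟩
  · rw [key_aux d f g η q hηm]
    have h := hg (uRatio d q) (uRatio d η) (fun i => div_nonneg (hq0 _) hqm.le)
      (fun i => div_nonneg (hη0 _) hηm.le)
    have := mul_le_mul_of_nonneg_left h hηm.le
    linarith
  · rw [key_aux d f g η η hηm]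
    simp
end

section
/- Let m ≥ 2. For β ∈ (0,1) ∪ (1,∞) and q ∈ Δ_m define ‖q‖_β = (Σ_{j=1}^m q_j^β)^{1/β} and H^r_β(q) = (‖q‖_β − 1)/(m^{1/β−1} − 1). Then for every q ∈ Δ_m with q_j > 0 for all j: (i) lim_{β→0+} H^r_β(q) = m · (∏_{j=1}^m q_j)^{1/m}; (ii) lim_{β→1} H^r_β(q) = −(log m)^{−1} Σ_{j=1}^m q_j log q_j (limit taken over β ∈ (0,1) ∪ (1,∞)); (iii) lim_{β→∞} H^r_β(q) = (1 − 1/m)^{−1} (1 − max_{j∈{1,…,m}} q_j). -/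
open Finset

/-- The rescaled entropy `H^r_β(q) = (‖q‖_β - 1)/(m^{1/β-1} - 1)`. -/
noncomputable def Hr (m : ℕ) (β : ℝ) (q : Fin m → ℝ) : ℝ :=
  ((∑ j, q j ^ β) ^ (1 / β) - 1) / ((m : ℝ) ^ (1 / β - 1) - 1)

open Filter Topology in
theorem aux_S (d : ℕ) (q : Fin (d + 1) → ℝ) (hq0 : ∀ j, 0 < q j) (b : ℝ) :
    HasDerivAt (fun β : ℝ => ∑ j, q j ^ β) (∑ j, q j ^ b * Real.log (q j)) b := by
  apply HasDerivAt.fun_sum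
  intro j _
  exact (Real.hasStrictDerivAt_const_rpow (hq0 j) b).hasDerivAt

theorem aux_Spos (d : ℕ) (q : Fin (d + 1) → ℝ) (hq0 : ∀ j, 0 < q j) (b : ℝ) :
    0 < ∑ j, q j ^ b :=
  Finset.sum_pos (fun j _ => Real.rpow_pos_of_pos (hq0 j) b) Finset.univ_nonempty

open Filter Topology in
theorem part1 (d : ℕ) (hd : 1 ≤ d) (q : Fin (d + 1) → ℝ)
    (hq0 : ∀ j, 0 < q j) :
    Filter.Tendsto (fun β => Hr (d + 1) β q) (nhdsWithin 0 (Set.Ioi 0))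
      (nhds (((d : ℝ) + 1) * (∏ j, q j) ^ (((d : ℝ) + 1)⁻¹))) := by
  have hd' : (1 : ℝ) ≤ d := by exact_mod_cast hd
  set M : ℝ := (d : ℝ) + 1 with hM
  have hM0 : 0 < M := by linarith
  have hM1 : 1 < M := by linarith
  have hP : 0 < ∏ j, q j := Finset.prod_pos fun j _ => hq0 j
  have h0 : (∑ j, q j ^ (0 : ℝ)) = M := by simp [hM]
  have hD : HasDerivAt (fun β : ℝ => Real.log ((∑ j, q j ^ β) / M))
      (Real.log (∏ j, q j) * M⁻¹) 0 := by
    have h1 := ((aux_S d q hq0 0).div_const M).log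
      (by rw [h0]; positivity)
    convert h1 using 1
    rw [h0, Real.log_prod (fun j _ => (hq0 j).ne')]
    simp only [Real.rpow_zero, one_mul]
    field_simp
  have hlim1 : Tendsto (fun β : ℝ => ((∑ j, q j ^ β) / M) ^ (1 / β)) (𝓝[>] 0)
      (𝓝 ((∏ j, q j) ^ M⁻¹)) := by
    rw [Real.rpow_def_of_pos hP]
    have h2 := (hasDerivAt_iff_tendsto_slope.1 hD).mono_left
      (nhdsWithin_mono (0 : ℝ) (fun x (hx : 0 < x) => hx.ne'))
    refine ((Real.continuous_exp.tendsto _).comp h2).congr fun β => ?_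
    have hS := aux_Spos d q hq0 β
    simp only [Function.comp]
    rw [Real.rpow_def_of_pos (by positivity), slope_def_field, h0, div_self hM0.ne']
    simp [div_eq_mul_inv]
  have hinv : Tendsto (fun β : ℝ => 1 / β) (𝓝[>] 0) atTop := by
    simpa using tendsto_inv_nhdsGT_zero (𝕜 := ℝ)
  have hlim2 : Tendsto (fun β : ℝ => (M ^ (1 / β))⁻¹) (𝓝[>] 0) (𝓝 0) :=
    tendsto_inv_atTop_zero.comp ((tendsto_rpow_atTop_of_base_gt_one M hM1).comp hinv)
  have hfin := (hlim1.sub hlim2).div ((tendsto_const_nhds (x := M⁻¹)).sub hlim2)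
    (by simpa using hM0.ne')
  have he : ((∏ j, q j) ^ M⁻¹ - 0) / (M⁻¹ - 0) = M * (∏ j, q j) ^ M⁻¹ := by
    field_simp; ring
  rw [he] at hfin
  refine hfin.congr fun β => ?_
  have hS := aux_Spos d q hq0 β
  simp only [Pi.div_apply, Hr, Nat.cast_add, Nat.cast_one]
  rw [← hM, Real.div_rpow hS.le hM0.le, Real.rpow_sub hM0, Real.rpow_one]
  have hp : 0 < M ^ (1 / β) := Real.rpow_pos_of_pos hM0 _
  generalize M ^ (1 / β) = A at *
  generalize (∑ j, q j ^ β) ^ (1 / β) = B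
  rw [← mul_div_mul_left (B / A - A⁻¹) (M⁻¹ - A⁻¹) hp.ne']
  congr 1
  · field_simp
  · field_simp

open Filter Topology in
theorem part2 (d : ℕ) (hd : 1 ≤ d) (q : Fin (d + 1) → ℝ)
    (hq0 : ∀ j, 0 < q j) (hq1 : ∑ j, q j = 1) :
    Filter.Tendsto (fun β => Hr (d + 1) β q)
      (nhdsWithin 1 (Set.Ioo (0 : ℝ) 1 ∪ Set.Ioi 1))
      (nhds (-(Real.log ((d : ℝ) + 1))⁻¹ * ∑ j, q j * Real.log (q j))) := by
  have hd' : (1 : ℝ) ≤ d := by exact_mod_cast hd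
  set M : ℝ := (d : ℝ) + 1 with hM
  have hM0 : 0 < M := by linarith
  have hM1 : 1 < M := by linarith
  have hlog : 0 < Real.log M := Real.log_pos hM1
  have h1 : (∑ j, q j ^ (1 : ℝ)) = 1 := by simpa using hq1
  have hi : HasDerivAt (fun β : ℝ => 1 / β) (-1) 1 := by
    simpa using hasDerivAt_inv (one_ne_zero (α := ℝ))
  have hF : HasDerivAt (fun β : ℝ => (∑ j, q j ^ β) ^ (1 / β))
      (∑ j, q j * Real.log (q j)) 1 := by
    have := (aux_S d q hq0 1).rpow hi (by rw [h1]; norm_num)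
    simpa [h1, hq1] using this
  have hG : HasDerivAt (fun β : ℝ => M ^ (1 / β - 1)) (-Real.log M) 1 := by
    have := (hi.sub_const 1).const_rpow hM0
    simpa using this
  have hsub : Set.Ioo (0 : ℝ) 1 ∪ Set.Ioi 1 ⊆ {1}ᶜ := by
    rintro x (hx | hx)
    · exact hx.2.ne
    · exact (Set.mem_Ioi.1 hx).ne'
  have h2 := ((hasDerivAt_iff_tendsto_slope.1 hF).div (hasDerivAt_iff_tendsto_slope.1 hG)
    (by simpa using hlog.ne')).mono_left (nhdsWithin_mono (1 : ℝ) hsub)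
  have he : (∑ j, q j * Real.log (q j)) / (-Real.log M)
      = -(Real.log M)⁻¹ * ∑ j, q j * Real.log (q j) := by
    rw [div_neg, div_eq_mul_inv]; ring
  rw [he] at h2
  refine h2.congr' ?_
  filter_upwards [self_mem_nhdsWithin] with β hβ
  have hb : β - 1 ≠ 0 := sub_ne_zero.2 (hsub hβ)
  simp only [Pi.div_apply, Hr, Nat.cast_add, Nat.cast_one, slope_def_field]
  rw [div_div_div_cancel_right₀ hb, h1]
  simp [hM]

open Filter Topology in
theorem part3 (d : ℕ) (hd : 1 ≤ d) (q : Fin (d + 1) → ℝ)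
    (hq0 : ∀ j, 0 < q j) :
    Filter.Tendsto (fun β => Hr (d + 1) β q) Filter.atTop
      (nhds ((1 - ((d : ℝ) + 1)⁻¹)⁻¹ * (1 - ⨆ j, q j))) := by
  have hd' : (1 : ℝ) ≤ d := by exact_mod_cast hd
  set M : ℝ := (d : ℝ) + 1 with hM
  have hM0 : 0 < M := by linarith
  have hM1 : 1 < M := by linarith
  obtain ⟨i, hi⟩ := exists_eq_ciSup_of_finite (f := q)
  have hle : ∀ j, q j ≤ q i := fun j => by
    rw [hi]; exact le_ciSup (Set.finite_range q).bddAbove j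
  rw [← hi]
  have hinv : Tendsto (fun β : ℝ => 1 / β) atTop (𝓝 0) := by
    simpa using tendsto_inv_atTop_zero (𝕜 := ℝ)
  have hM2 : Tendsto (fun β : ℝ => M ^ (1 / β)) atTop (𝓝 1) := by
    simpa using (tendsto_const_nhds (x := M)).rpow hinv (Or.inl hM0.ne')
  have hM3 : Tendsto (fun β : ℝ => M ^ (1 / β - 1)) atTop (𝓝 M⁻¹) := by
    have := (tendsto_const_nhds (x := M)).rpow (hinv.sub_const 1) (Or.inl hM0.ne')
    simpa [Real.rpow_neg_one] using this
  have hS : Tendsto (fun β : ℝ => (∑ j, q j ^ β) ^ (1 / β)) atTop (𝓝 (q i)) := by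
    have hu : Tendsto (fun β : ℝ => M ^ (1 / β) * q i) atTop (𝓝 (q i)) := by
      simpa using hM2.mul_const (q i)
    refine tendsto_of_tendsto_of_tendsto_of_le_of_le' tendsto_const_nhds hu ?_ ?_
    · filter_upwards [eventually_gt_atTop 0] with β hβ
      have h1 : q i ^ β ≤ ∑ j, q j ^ β :=
        Finset.single_le_sum (f := fun j => q j ^ β)
          (fun j _ => (Real.rpow_pos_of_pos (hq0 j) β).le) (Finset.mem_univ i)
      have h2 := Real.rpow_le_rpow (Real.rpow_pos_of_pos (hq0 i) β).le h1
        (one_div_pos.2 hβ).le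
      rwa [← Real.rpow_mul (hq0 i).le, mul_one_div_cancel hβ.ne', Real.rpow_one] at h2
    · filter_upwards [eventually_gt_atTop 0] with β hβ
      have h1 : ∑ j, q j ^ β ≤ M * q i ^ β := by
        have := Finset.sum_le_card_nsmul Finset.univ (fun j => q j ^ β) (q i ^ β)
          (fun j _ => Real.rpow_le_rpow (hq0 j).le (hle j) hβ.le)
        simpa [hM] using this
      have h2 := Real.rpow_le_rpow (aux_Spos d q hq0 β).le h1 (one_div_pos.2 hβ).le
      rwa [Real.mul_rpow hM0.le (Real.rpow_pos_of_pos (hq0 i) β).le,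
        ← Real.rpow_mul (hq0 i).le, mul_one_div_cancel hβ.ne', Real.rpow_one] at h2
  have hMi : M⁻¹ < 1 := inv_lt_one_of_one_lt₀ hM1
  have hfin := (hS.sub_const 1).div (hM3.sub_const 1) (by linarith)
  have he : (q i - 1) / (M⁻¹ - 1) = (1 - M⁻¹)⁻¹ * (1 - q i) := by
    rw [← neg_div_neg_eq, div_eq_mul_inv]; ring
  rw [he] at hfin
  refine hfin.congr fun β => ?_
  simp [Hr, hM]

theorem stmt4 (d : ℕ) (hd : 1 ≤ d) (q : Fin (d + 1) → ℝ)
    (hq0 : ∀ j, 0 < q j) (hq1 : ∑ j, q j = 1) :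
    -- (i) β → 0+ : simultaneous exponential entropy
    Filter.Tendsto (fun β => Hr (d + 1) β q) (nhdsWithin 0 (Set.Ioi 0))
      (nhds (((d : ℝ) + 1) * (∏ j, q j) ^ (((d : ℝ) + 1)⁻¹)))
    ∧
    -- (ii) β → 1 over (0,1) ∪ (1,∞) : rescaled Shannon entropy
    Filter.Tendsto (fun β => Hr (d + 1) β q)
      (nhdsWithin 1 (Set.Ioo (0 : ℝ) 1 ∪ Set.Ioi 1))
      (nhds (-(Real.log ((d : ℝ) + 1))⁻¹ * ∑ j, q j * Real.log (q j)))
    ∧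
    -- (iii) β → ∞ : rescaled zero-one entropy
    Filter.Tendsto (fun β => Hr (d + 1) β q) Filter.atTop
      (nhds ((1 - ((d : ℝ) + 1)⁻¹)⁻¹ * (1 - ⨆ j, q j))) := by
  exact ⟨part1 d hd q hq0, part2 d hd q hq0 hq1, part3 d hd q hq0⟩
end

section
/- Let m ≥ 2 and β ∈ (0,1). The function g : ℝ^{m−1} → ℝ defined by g(x) = (1 + Σ_{i=1}^{m−1} exp(β x_i))^{1/β − 1} is convex on ℝ^{m−1}. Consequently, the composite loss L_β(j, q^h) = {1 + Σ_{i≠j} exp(β(h_i − h_j))}^{1/β − 1}, obtained from the L_β scoring rule under the multinomial logistic link, is a convex function of h ∈ ℝ^m for each j ∈ {1,…,m}. -/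
open Finset

theorem aux_convex {ι E : Type*} [AddCommGroup E] [Module ℝ E] (s : Finset ι) (f : ι → E → ℝ)
    (hf : ∀ i x y (a b : ℝ), f i (a • x + b • y) = a * f i x + b * f i y) (p : ℝ) (hp : 0 ≤ p) :
    ConvexOn ℝ Set.univ (fun x : E => (1 + ∑ i ∈ s, Real.exp (f i x)) ^ p) := by
  refine ⟨convex_univ, ?_⟩
  intro x _ y _ a b ha hb hab
  simp only [hf, smul_eq_mul]
  set A := 1 + ∑ i ∈ s, Real.exp (f i x) with hA
  set B := 1 + ∑ i ∈ s, Real.exp (f i y) with hB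
  have hA0 : 0 < A := by positivity
  have hB0 : 0 < B := by positivity
  have key : ∀ c d : ℝ, Real.exp (a * c + b * d) ≤
      A ^ a * B ^ b * (a * (Real.exp c / A) + b * (Real.exp d / B)) := by
    intro c d
    have h1 := Real.geom_mean_le_arith_mean2_weighted ha hb
      (div_pos (Real.exp_pos c) hA0).le (div_pos (Real.exp_pos d) hB0).le hab
    have hAa : 0 < A ^ a := Real.rpow_pos_of_pos hA0 a
    have hBb : 0 < B ^ b := Real.rpow_pos_of_pos hB0 b
    have h2 : Real.exp (a * c + b * d) =
        A ^ a * B ^ b * ((Real.exp c / A) ^ a * (Real.exp d / B) ^ b) := by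
      rw [Real.div_rpow (Real.exp_pos c).le hA0.le, Real.div_rpow (Real.exp_pos d).le hB0.le,
        ← Real.exp_mul, ← Real.exp_mul, Real.exp_add, mul_comm c a, mul_comm d b]
      field_simp
    rw [h2]
    exact mul_le_mul_of_nonneg_left h1 (by positivity)
  have hS : 1 + ∑ i ∈ s, Real.exp (a * f i x + b * f i y) ≤ A ^ a * B ^ b := by
    have h0 := key 0 0
    have h1 := Finset.sum_le_sum (fun i (_ : i ∈ s) => key (f i x) (f i y))
    rw [← Finset.mul_sum, Finset.sum_add_distrib, ← Finset.mul_sum, ← Finset.mul_sum,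
      ← Finset.sum_div, ← Finset.sum_div] at h1
    simp only [mul_zero, add_zero, Real.exp_zero] at h0
    have e1 : 1 / A + (∑ i ∈ s, Real.exp (f i x)) / A = 1 := by
      rw [← add_div, ← hA, div_self hA0.ne']
    have e2 : 1 / B + (∑ i ∈ s, Real.exp (f i y)) / B = 1 := by
      rw [← add_div, ← hB, div_self hB0.ne']
    refine (add_le_add h0 h1).trans (le_of_eq ?_)
    linear_combination (A ^ a * B ^ b) * (a * e1 + b * e2 + hab)
  calc _ ≤ (A ^ a * B ^ b) ^ p := Real.rpow_le_rpow (by positivity) hS hp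
    _ = (A ^ p) ^ a * (B ^ p) ^ b := by
      rw [Real.mul_rpow (by positivity) (by positivity), ← Real.rpow_mul hA0.le,
        ← Real.rpow_mul hB0.le, ← Real.rpow_mul hA0.le, ← Real.rpow_mul hB0.le,
        mul_comm a, mul_comm b]
    _ ≤ _ := Real.geom_mean_le_arith_mean2_weighted ha hb (by positivity) (by positivity) hab

theorem stmt5 (m : ℕ) (hm : 2 ≤ m) (β : ℝ) (hβ : β ∈ Set.Ioo (0 : ℝ) 1) :
    -- g(x) = (1 + Σ exp(β x_i))^{1/β - 1} is convex on ℝ^{m-1}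
    ConvexOn ℝ Set.univ
      (fun x : Fin (m - 1) → ℝ =>
        (1 + ∑ i, Real.exp (β * x i)) ^ (1 / β - 1))
    ∧
    -- hence the composite loss L_β(j, q^h) is convex in h for each j
    ∀ j : Fin m, ConvexOn ℝ Set.univ
      (fun h : Fin m → ℝ =>
        (1 + ∑ i ∈ Finset.univ.erase j, Real.exp (β * (h i - h j))) ^ (1 / β - 1)) := by
  have hp : 0 ≤ 1 / β - 1 := by
    have := one_le_one_div hβ.1 hβ.2.le
    linarith
  refine ⟨aux_convex Finset.univ (fun i (x : Fin (m - 1) → ℝ) => β * x i) ?_ _ hp, fun j =>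
    aux_convex (Finset.univ.erase j) (fun i (h : Fin m → ℝ) => β * (h i - h j)) ?_ _ hp⟩
  · intro i x y a b
    simp only [Pi.add_apply, Pi.smul_apply, smul_eq_mul]
    ring
  · intro i x y a b
    simp only [Pi.add_apply, Pi.smul_apply, smul_eq_mul]
    ring
end

section
/- Let m ≥ 2 and let C = (c_{jk}) be a cost matrix. Define f^{cw} : ℝ_{≥0}^{m−1} → ℝ by f^{cw}(t) = max_{k∈{1,…,m}} ( −(Σ_{j=1}^{m−1} c_{jk} t_j + c_{mk}) ). Then for every s ∈ ℝ^{m−1}, in ℝ ∪ {+∞}: sup_{t ∈ ℝ_{≥0}^{m−1}} (⟨s, t⟩ − f^{cw}(t)) = inf { Σ_{k=1}^m c_{mk} λ_k : λ ∈ Δ_m and s_j ≤ −Σ_{k=1}^m c_{jk} λ_k for every j ∈ {1,…,m−1} }, where the infimum over the empty set is +∞. In particular the supremum is finite if and only if the constraint set is nonempty, and in that case the infimum is attained. -/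
open Finset

/-- `f^{cw}(t) = max_k ( -(Σ_{j<m} c_{jk} t_j + c_{mk}) )` with `m = d+1`. -/
noncomputable def fcw (d : ℕ) (C : Fin (d + 1) → Fin (d + 1) → ℝ)
    (t : Fin d → ℝ) : ℝ :=
  ⨆ k : Fin (d + 1), -(∑ j : Fin d, C j.castSucc k * t j + C (Fin.last d) k)

/-- The constraint set `{λ ∈ Δ_m : s_j ≤ -(Cλ)_j for j ∈ [m-1]}`. -/
def cwFeas (d : ℕ) (C : Fin (d + 1) → Fin (d + 1) → ℝ) (s : Fin d → ℝ)
    (lam : Fin (d + 1) → ℝ) : Prop :=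
  (∀ k, 0 ≤ lam k) ∧ ∑ k, lam k = 1 ∧
    ∀ j : Fin d, s j ≤ -∑ k, C j.castSucc k * lam k

theorem aux_alt {n : ℕ} (C : Fin n → Fin n → ℝ) (b : Fin n → ℝ)
    (hno : ¬ ∃ l ∈ stdSimplex ℝ (Fin n), ∀ j, ∑ k, C j k * l k ≤ b j) :
    ∃ (y : Fin n → ℝ) (β : ℝ), (∀ j, 0 ≤ y j) ∧ ∑ j, y j * b j < β ∧
      ∀ k, β < ∑ j, y j * C j k := by
  let A : (Fin n → ℝ) →ₗ[ℝ] (Fin n → ℝ) := Matrix.mulVecLin (Matrix.of C)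
  have hA : ∀ l j, A l j = ∑ k, C j k * l k := by
    intro l j
    simp [A, Matrix.mulVec, dotProduct]
  have hAc : Continuous A := A.continuous_of_finiteDimensional
  have hdis : Disjoint (A '' stdSimplex ℝ (Fin n)) (Set.Iic b) := by
    rw [Set.disjoint_left]
    rintro _ ⟨l, hl, rfl⟩ hb
    exact hno ⟨l, hl, fun j => by rw [← hA]; exact hb j⟩
  obtain ⟨f, u, v, h1, h2, h3⟩ := geometric_hahn_banach_compact_closed
    ((convex_stdSimplex ℝ (Fin n)).linear_image A)
    ((isCompact_stdSimplex ℝ (Fin n)).image hAc) (convex_Iic b) isClosed_Iic hdis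
  have hf : ∀ x : Fin n → ℝ, f x = ∑ j, x j * f (Pi.single j 1) := by
    intro x
    conv_lhs => rw [pi_eq_sum_univ' x]
    rw [map_sum]
    refine Finset.sum_congr rfl fun j _ => ?_
    rw [map_smul, smul_eq_mul]
  refine ⟨fun j => - f (Pi.single j 1), -u, ?_, ?_, ?_⟩
  · intro j
    by_contra hneg
    have hpos : 0 < f (Pi.single j 1) := by
      by_contra h; apply hneg; simp only; linarith
    have hvb := h3 b (Set.mem_Iic.2 le_rfl)
    set c := f (Pi.single j 1)
    have hN : 0 ≤ (f b - v) / c := div_nonneg (by linarith) hpos.le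
    have := h3 (b - ((f b - v) / c) • Pi.single j 1) (by
      refine Set.mem_Iic.2 (sub_le_self _ (smul_nonneg hN ?_))
      exact Pi.single_nonneg.2 zero_le_one)
    rw [map_sub, map_smul, smul_eq_mul, div_mul_cancel₀ _ hpos.ne'] at this
    linarith
  · have hvb := h3 b (Set.mem_Iic.2 le_rfl)
    rw [hf] at hvb
    have : ∑ j, -f (Pi.single j 1) * b j = - ∑ j, b j * f (Pi.single j 1) := by
      rw [← Finset.sum_neg_distrib]
      exact Finset.sum_congr rfl fun j _ => by ring
    rw [this]; linarith
  · intro k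
    have hk := h1 _ ⟨_, single_mem_stdSimplex ℝ k, rfl⟩
    rw [hf] at hk
    have : ∑ j, -f (Pi.single j 1) * C j k
        = - ∑ j, A (Pi.single k 1) j * f (Pi.single j 1) := by
      rw [← Finset.sum_neg_distrib]
      refine Finset.sum_congr rfl fun j _ => ?_
      rw [hA]
      simp [Pi.single_apply]
      ring
    rw [this]; linarith

theorem aux_key (d : ℕ) (C : Fin (d + 1) → Fin (d + 1) → ℝ)
    (hCnn : ∀ j k, 0 ≤ C j k) (s : Fin d → ℝ) (r : ℝ)
    (h : ∀ t : Fin d → ℝ, (∀ i, 0 ≤ t i) → ∑ i, s i * t i - fcw d C t ≤ r) :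
    ∃ l, cwFeas d C s l ∧ ∑ k, C (Fin.last d) k * l k ≤ r := by
  by_contra hcon
  have hno : ¬ ∃ l ∈ stdSimplex ℝ (Fin (d+1)), ∀ j, ∑ k, C j k * l k ≤
      (Fin.snoc (fun j => - s j) r : Fin (d+1) → ℝ) j := by
    rintro ⟨l, hl, hj⟩
    refine hcon ⟨l, ⟨hl.1, hl.2, fun j => ?_⟩, ?_⟩
    · have := hj j.castSucc
      rw [Fin.snoc_castSucc] at this
      linarith
    · simpa using hj (Fin.last d)
  obtain ⟨y, β, hy, hb, hk⟩ := aux_alt C _ hno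
  simp only [Fin.sum_univ_castSucc, Fin.snoc_castSucc, Fin.snoc_last] at hb hk
  set q := y (Fin.last d) with hq
  obtain ⟨g, hg⟩ : ∃ g, g = β - (∑ j : Fin d, y j.castSucc * - s j + q * r) := ⟨_, rfl⟩
  have hg0 : 0 < g := by linarith
  obtain ⟨ε, hε0, hε⟩ : ∃ ε > 0, ε * r < g := by
    refine ⟨g / (|r| + 1), by positivity, ?_⟩
    rw [div_mul_eq_mul_div, div_lt_iff₀ (by positivity)]
    nlinarith [le_abs_self r]
  have hw : 0 < q + ε := by have := hy (Fin.last d); linarith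
  have ht := h (fun j => y j.castSucc / (q + ε)) (fun j => div_nonneg (hy _) hw.le)
  obtain ⟨k, hkk⟩ := exists_eq_ciSup_of_finite (f := fun k : Fin (d + 1) =>
    -(∑ j : Fin d, C j.castSucc k * (y j.castSucc / (q + ε)) + C (Fin.last d) k))
  have hfc : fcw d C (fun j => y j.castSucc / (q + ε)) =
      -(∑ j : Fin d, C j.castSucc k * (y j.castSucc / (q + ε)) + C (Fin.last d) k) := hkk.symm
  rw [hfc] at ht
  have e1 : ∑ i : Fin d, s i * (y i.castSucc / (q + ε)) =
      -(∑ j : Fin d, y j.castSucc * - s j) / (q + ε) := by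
    rw [← Finset.sum_neg_distrib, Finset.sum_div]
    exact Finset.sum_congr rfl fun j _ => by ring
  have e2 : ∑ j : Fin d, C j.castSucc k * (y j.castSucc / (q + ε)) =
      (∑ j : Fin d, y j.castSucc * C j.castSucc k) / (q + ε) := by
    rw [Finset.sum_div]
    exact Finset.sum_congr rfl fun j _ => by ring
  rw [e1, e2] at ht
  have hkβ := hk k
  set S := ∑ j : Fin d, y j.castSucc * - s j
  set T := ∑ j : Fin d, y j.castSucc * C j.castSucc k
  have h5 : (-S + T) / (q + ε) ≤ r - C (Fin.last d) k := by
    rw [add_div]; linarith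
  rw [div_le_iff₀ hw] at h5
  nlinarith [mul_nonneg hε0.le (hCnn (Fin.last d) k)]

theorem aux_weak (d : ℕ) (C : Fin (d + 1) → Fin (d + 1) → ℝ) (s : Fin d → ℝ)
    (t : Fin d → ℝ) (ht : ∀ i, 0 ≤ t i) (l : Fin (d + 1) → ℝ) (hl : cwFeas d C s l) :
    ∑ i, s i * t i - fcw d C t ≤ ∑ k, C (Fin.last d) k * l k := by
  obtain ⟨h0, h1, h2⟩ := hl
  have ha : ∑ i, s i * t i ≤ ∑ i : Fin d, (-∑ k, C i.castSucc k * l k) * t i :=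
    Finset.sum_le_sum fun i _ => mul_le_mul_of_nonneg_right (h2 i) (ht i)
  have hb : ∑ k, l k * -(∑ j : Fin d, C j.castSucc k * t j + C (Fin.last d) k) ≤ fcw d C t := by
    calc _ ≤ ∑ k, l k * fcw d C t := by
          refine Finset.sum_le_sum fun k _ => mul_le_mul_of_nonneg_left ?_ (h0 k)
          exact le_ciSup (f := fun k : Fin (d + 1) =>
            -(∑ j : Fin d, C j.castSucc k * t j + C (Fin.last d) k))
            (Set.finite_range _).bddAbove k
      _ = fcw d C t := by rw [← Finset.sum_mul, h1, one_mul]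
  have hc : ∑ i : Fin d, (-∑ k, C i.castSucc k * l k) * t i
      = ∑ k, l k * -(∑ j : Fin d, C j.castSucc k * t j + C (Fin.last d) k)
        + ∑ k, C (Fin.last d) k * l k := by
    rw [← Finset.sum_add_distrib]
    have : ∀ k, l k * -(∑ j : Fin d, C j.castSucc k * t j + C (Fin.last d) k)
        + C (Fin.last d) k * l k = ∑ j : Fin d, -(C j.castSucc k * l k) * t j := by
      intro k
      have : ∑ j : Fin d, -(C j.castSucc k * l k) * t j
          = -(l k * ∑ j : Fin d, C j.castSucc k * t j) := by
        rw [Finset.mul_sum, ← Finset.sum_neg_distrib]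
        exact Finset.sum_congr rfl fun j _ => by ring
      rw [this]; ring
    simp_rw [this]
    rw [Finset.sum_comm]
    refine Finset.sum_congr rfl fun i _ => ?_
    rw [← Finset.sum_mul, Finset.sum_neg_distrib]
  linarith

theorem stmt6 (d : ℕ) (hd : 1 ≤ d) (C : Fin (d + 1) → Fin (d + 1) → ℝ)
    (hC0 : ∀ j, C j j = 0) (hCnn : ∀ j k, 0 ≤ C j k)
    (hCpos : ∀ j, ∃ k, k ≠ j ∧ 0 < C j k) (s : Fin d → ℝ) :
    -- equality in ℝ ∪ {+∞} (the infimum over an empty index type is ⊤ in EReal)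
    ((⨆ t : {t : Fin d → ℝ // ∀ i, 0 ≤ t i},
        ((∑ i, s i * t.1 i - fcw d C t.1 : ℝ) : EReal))
      = ⨅ lam : {lam : Fin (d + 1) → ℝ // cwFeas d C s lam},
          ((∑ k, C (Fin.last d) k * lam.1 k : ℝ) : EReal))
    ∧
    -- the supremum is finite iff the constraint set is nonempty
    ((⨆ t : {t : Fin d → ℝ // ∀ i, 0 ≤ t i},
        ((∑ i, s i * t.1 i - fcw d C t.1 : ℝ) : EReal)) < ⊤ ↔
      ∃ lam : Fin (d + 1) → ℝ, cwFeas d C s lam)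
    ∧
    -- and in that case the infimum is attained
    ((∃ lam : Fin (d + 1) → ℝ, cwFeas d C s lam) →
      ∃ lam₀ : Fin (d + 1) → ℝ, cwFeas d C s lam₀ ∧
        ∀ lam : Fin (d + 1) → ℝ, cwFeas d C s lam →
          ∑ k, C (Fin.last d) k * lam₀ k ≤ ∑ k, C (Fin.last d) k * lam k) := by
  set S : EReal := ⨆ t : {t : Fin d → ℝ // ∀ i, 0 ≤ t i},
        ((∑ i, s i * t.1 i - fcw d C t.1 : ℝ) : EReal) with hS
  have hweak : ∀ l, cwFeas d C s l → S ≤ ((∑ k, C (Fin.last d) k * l k : ℝ) : EReal) :=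
    fun l hl => iSup_le fun t => EReal.coe_le_coe_iff.2 (aux_weak d C s t.1 t.2 l hl)
  have hbot : S ≠ ⊥ := by
    have h0 := le_iSup (fun t : {t : Fin d → ℝ // ∀ i, 0 ≤ t i} =>
        ((∑ i, s i * t.1 i - fcw d C t.1 : ℝ) : EReal)) ⟨0, fun _ => le_rfl⟩
    exact ne_bot_of_le_ne_bot (EReal.coe_ne_bot _) h0
  have hkey : S < ⊤ → ∃ l, cwFeas d C s l ∧ ((∑ k, C (Fin.last d) k * l k : ℝ) : EReal) ≤ S := by
    intro hlt
    have hr : ((S.toReal : ℝ) : EReal) = S := EReal.coe_toReal hlt.ne hbot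
    obtain ⟨l, hl, hle⟩ := aux_key d C hCnn s S.toReal (fun t ht => by
      have h0 := le_iSup (fun t : {t : Fin d → ℝ // ∀ i, 0 ≤ t i} =>
        ((∑ i, s i * t.1 i - fcw d C t.1 : ℝ) : EReal)) ⟨t, ht⟩
      rw [← hS, ← hr] at h0
      exact EReal.coe_le_coe_iff.1 h0)
    exact ⟨l, hl, by rw [← hr]; exact EReal.coe_le_coe_iff.2 hle⟩
  have hfin : (∃ l, cwFeas d C s l) → S < ⊤ := fun ⟨l, hl⟩ =>
    (hweak l hl).trans_lt (EReal.coe_lt_top _)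
  refine ⟨le_antisymm (le_iInf fun l => hweak l.1 l.2) ?_,
    ⟨fun h => let ⟨l, hl, _⟩ := hkey h; ⟨l, hl⟩, hfin⟩, fun h => ?_⟩
  · rcases eq_or_ne S ⊤ with h | h
    · rw [h]; exact le_top
    · obtain ⟨l, hl, hle⟩ := hkey (lt_top_iff_ne_top.2 h)
      exact (iInf_le _ (⟨l, hl⟩ : {l // cwFeas d C s l})).trans hle
  · obtain ⟨l, hl, hle⟩ := hkey (hfin h)
    exact ⟨l, hl, fun l' hl' => EReal.coe_le_coe_iff.1 (hle.trans (hweak l' hl'))⟩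
end

section
/- Let m ≥ 2. Then: (a) for each j ∈ {1,…,m}, the map τ ↦ L^{zo4}(j, τ) is convex on ℝ^{m−1}; (b) if τ̃ := (τ_1, …, τ_{m−1}, 1 − Σ_{k=1}^{m−1} τ_k) ∈ Δ_m, then L^{zo4}(j, τ) = 1 − τ̃_j for every j ∈ {1,…,m}; (c) for every η ∈ Δ_m, inf_{τ ∈ ℝ^{m−1}} Σ_{j=1}^m η_j L^{zo4}(j, τ) = 1 − max_{k∈{1,…,m}} η_k. -/
open Finset

/-- `τ̃ = (τ_1, …, τ_{m-1}, 1 - Σ τ_k)`. -/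
noncomputable def tauTilde (d : ℕ) (τ : Fin d → ℝ) : Fin (d + 1) → ℝ :=
  Fin.snoc τ (1 - ∑ i, τ i)

/-- `S_τ^{(j)} = max{0, max_{1≤l≤m-1} (τ̃_j + τ̃_{j(1)} + … + τ̃_{j(l-1)} - 1)/l}`.
Since the sum of the `l-1` largest components of `τ̃` other than `τ̃_j` equals the
maximum over subsets `A` of `{1,…,m}\{j}` of cardinality `l-1` of `Σ_{k∈A} τ̃_k`,
this is the supremum of `0` together with all `(τ̃_j + Σ_{k∈A} τ̃_k - 1)/(|A|+1)`
over subsets `A ⊆ {1,…,m}\{j}` with `|A| ≤ m-2`. -/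
noncomputable def Szo4 (d : ℕ) (τt : Fin (d + 1) → ℝ) (j : Fin (d + 1)) : ℝ :=
  sSup (insert 0 {x : ℝ | ∃ A : Finset (Fin (d + 1)),
    A ⊆ Finset.univ.erase j ∧ A.card ≤ d - 1 ∧
    x = (τt j + ∑ k ∈ A, τt k - 1) / (A.card + 1)})

/-- The hinge-like loss `L^{zo4}(j,τ) = 1 - τ̃_j + S_τ^{(j)}`. -/
noncomputable def Lzo4 (d : ℕ) (j : Fin (d + 1)) (τ : Fin d → ℝ) : ℝ :=
  1 - tauTilde d τ j + Szo4 d (tauTilde d τ) j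

theorem zo4_finite (d : ℕ) (t : Fin (d + 1) → ℝ) (j : Fin (d + 1)) :
    BddAbove (insert 0 {x : ℝ | ∃ A : Finset (Fin (d + 1)),
    A ⊆ Finset.univ.erase j ∧ A.card ≤ d - 1 ∧
    x = (t j + ∑ k ∈ A, t k - 1) / (A.card + 1)}) := by
  apply Set.Finite.bddAbove
  apply Set.Finite.insert
  apply (Set.finite_range (fun A : Finset (Fin (d + 1)) =>
    (t j + ∑ k ∈ A, t k - 1) / ((A.card : ℝ) + 1))).subset
  rintro x ⟨A, _, _, rfl⟩
  exact ⟨A, rfl⟩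

theorem zo4_nonneg (d : ℕ) (t : Fin (d + 1) → ℝ) (j : Fin (d + 1)) : 0 ≤ Szo4 d t j :=
  le_csSup (zo4_finite d t j) (Set.mem_insert _ _)

theorem zo4_ge (d : ℕ) (t : Fin (d + 1) → ℝ) (j : Fin (d + 1)) (A : Finset (Fin (d + 1)))
    (hA : A ⊆ Finset.univ.erase j) (hc : A.card ≤ d - 1) :
    (t j + ∑ k ∈ A, t k - 1) / (A.card + 1) ≤ Szo4 d t j :=
  le_csSup (zo4_finite d t j) (Set.mem_insert_of_mem _ ⟨A, hA, hc, rfl⟩)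

theorem zo4_le (d : ℕ) (t : Fin (d + 1) → ℝ) (j : Fin (d + 1)) (c : ℝ) (h0 : 0 ≤ c)
    (h : ∀ A : Finset (Fin (d + 1)), A ⊆ Finset.univ.erase j → A.card ≤ d - 1 →
      (t j + ∑ k ∈ A, t k - 1) / (A.card + 1) ≤ c) : Szo4 d t j ≤ c := by
  apply csSup_le ⟨0, Set.mem_insert _ _⟩
  rintro x (rfl | ⟨A, hA, hc, rfl⟩)
  · exact h0
  · exact h A hA hc

theorem tauTilde_sum (d : ℕ) (τ : Fin d → ℝ) : ∑ k, tauTilde d τ k = 1 := by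
  simp [tauTilde, Fin.sum_univ_castSucc]

theorem tauTilde_surj (d : ℕ) (t : Fin (d + 1) → ℝ) (h : ∑ k, t k = 1) :
    ∃ τ, tauTilde d τ = t := by
  refine ⟨fun i => t i.castSucc, ?_⟩
  rw [Fin.sum_univ_castSucc] at h
  funext k
  refine Fin.lastCases ?_ (fun i => ?_) k
  · simp [tauTilde]; linarith
  · simp [tauTilde]

theorem tauTilde_comb (d : ℕ) (x y : Fin d → ℝ) (a b : ℝ) (hab : a + b = 1) (k : Fin (d + 1)) :
    tauTilde d (a • x + b • y) k = a * tauTilde d x k + b * tauTilde d y k := by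
  refine Fin.lastCases ?_ (fun i => ?_) k
  · simp only [tauTilde, Fin.snoc_last, Pi.add_apply, Pi.smul_apply, smul_eq_mul,
      Finset.sum_add_distrib, ← Finset.mul_sum]
    linear_combination -hab
  · simp [tauTilde]

theorem zo4_simplex (d : ℕ) (t : Fin (d + 1) → ℝ) (h0 : ∀ k, 0 ≤ t k) (h1 : ∑ k, t k = 1)
    (j : Fin (d + 1)) : Szo4 d t j = 0 := by
  apply le_antisymm _ (zo4_nonneg d t j)
  apply zo4_le _ _ _ _ le_rfl
  intro A hA _
  apply div_nonpos_of_nonpos_of_nonneg _ (by positivity)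
  have hj : j ∉ A := fun h => by simpa using hA h
  have := Finset.sum_le_sum_of_subset_of_nonneg (Finset.subset_univ (insert j A))
    (fun k _ _ => h0 k)
  rw [Finset.sum_insert hj, h1] at this
  linarith

theorem zo4_key (d : ℕ) (t : Fin (d + 1) → ℝ) (h1 : ∑ k, t k = 1) :
    ∑ j ∈ Finset.univ.filter (fun j => 0 < t j - Szo4 d t j), (t j - Szo4 d t j) ≤ 1 := by
  set P := Finset.univ.filter (fun j => 0 < t j - Szo4 d t j) with hP
  by_cases hu : P = Finset.univ
  · rw [hu, ← h1]
    apply Finset.sum_le_sum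
    intro j _
    linarith [zo4_nonneg d t j]
  rcases P.eq_empty_or_nonempty with he | hne
  · rw [he]; simp
  have hlt : P.card < d + 1 := by
    obtain ⟨x, hx⟩ : ∃ x, x ∉ P := by
      by_contra! h
      exact hu (Finset.eq_univ_iff_forall.2 h)
    have := Finset.card_lt_univ_of_notMem hx
    simpa using this
  have hpos : (0 : ℝ) < P.card := by exact_mod_cast hne.card_pos
  have hS : ∀ j ∈ P, t j - Szo4 d t j ≤ t j - (∑ k ∈ P, t k - 1) / P.card := by
    intro j hj
    have h := zo4_ge d t j (P.erase j) (Finset.erase_subset_erase _ (Finset.subset_univ _))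
      (by rw [Finset.card_erase_of_mem hj]; omega)
    rw [Finset.add_sum_erase _ _ hj] at h
    have hc : ((P.erase j).card : ℝ) + 1 = P.card := by
      exact_mod_cast Finset.card_erase_add_one hj
    rw [hc] at h
    linarith
  refine (Finset.sum_le_sum hS).trans ?_
  rw [Finset.sum_sub_distrib, Finset.sum_const, nsmul_eq_mul, mul_div_cancel₀ _ hpos.ne']
  linarith

theorem stmt8 (d : ℕ) (hd : 1 ≤ d) :
    -- (a) convexity in τ
    (∀ j, ConvexOn ℝ Set.univ (Lzo4 d j))
    ∧
    -- (b) extension property: on the simplex, L^{zo4}(j,τ) = 1 - τ̃_j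
    (∀ τ : Fin d → ℝ, (∀ k, 0 ≤ tauTilde d τ k) → ∑ k, tauTilde d τ k = 1 →
      ∀ j, Lzo4 d j τ = 1 - tauTilde d τ j)
    ∧
    -- (c) generalized entropy = zero-one entropy
    (∀ η : Fin (d + 1) → ℝ, (∀ j, 0 ≤ η j) → ∑ j, η j = 1 →
      IsGLB {x : ℝ | ∃ τ : Fin d → ℝ, x = ∑ j, η j * Lzo4 d j τ}
        (1 - ⨆ k, η k)) := by
  refine ⟨fun j => ⟨convex_univ, ?_⟩, ?_, ?_⟩
  · intro x _ y _ a b ha hb hab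
    have hs : Szo4 d (tauTilde d (a • x + b • y)) j ≤
        a * Szo4 d (tauTilde d x) j + b * Szo4 d (tauTilde d y) j := by
      have hx := zo4_nonneg d (tauTilde d x) j
      have hy := zo4_nonneg d (tauTilde d y) j
      apply zo4_le _ _ _ _ (by positivity)
      intro A hA hc
      have h1 := mul_le_mul_of_nonneg_left (zo4_ge d (tauTilde d x) j A hA hc) ha
      have h2 := mul_le_mul_of_nonneg_left (zo4_ge d (tauTilde d y) j A hA hc) hb
      refine le_trans (le_of_eq ?_) (add_le_add h1 h2)
      simp only [tauTilde_comb d x y a b hab, Finset.sum_add_distrib, ← Finset.mul_sum]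
      rw [← mul_div_assoc, ← mul_div_assoc, ← add_div]
      congr 1
      linear_combination hab
    simp only [Lzo4, tauTilde_comb d x y a b hab, smul_eq_mul]
    linarith
  · intro τ h0 h1 j
    simp [Lzo4, zo4_simplex d _ h0 h1 j]
  · intro η h0 h1
    have hle : ∀ k, η k ≤ ⨆ k, η k := fun k => le_ciSup (Set.finite_range η).bddAbove k
    constructor
    · rintro x ⟨τ, rfl⟩
      have hk := zo4_key d (tauTilde d τ) (tauTilde_sum d τ)
      set M := ⨆ k, η k with hM
      have hM0 : 0 ≤ M := (h0 0).trans (hle 0)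
      rw [Finset.sum_filter] at hk
      have hb : ∑ j, η j * (tauTilde d τ j - Szo4 d (tauTilde d τ) j) ≤ M := by
        refine le_trans (Finset.sum_le_sum (fun j _ => ?_))
          ((Finset.mul_sum _ _ M).symm.le.trans ((mul_le_mul_of_nonneg_left hk hM0).trans_eq
            (mul_one M)))
        split_ifs with h
        · exact mul_le_mul_of_nonneg_right (hle j) h.le
        · rw [mul_zero]
          exact mul_nonpos_of_nonneg_of_nonpos (h0 j) (not_lt.1 h)
      have he : ∑ j, η j * Lzo4 d j τ =
          1 - ∑ j, η j * (tauTilde d τ j - Szo4 d (tauTilde d τ) j) := by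
        rw [← h1, ← Finset.sum_sub_distrib]
        apply Finset.sum_congr rfl
        intro j _
        simp only [Lzo4]; ring
      rw [he]; linarith
    · obtain ⟨k, hk⟩ := exists_eq_ciSup_of_finite (f := η)
      obtain ⟨τ, hτ⟩ := tauTilde_surj d (Pi.single k 1) (by simp)
      intro b hb
      refine hb ⟨τ, ?_⟩
      have hz : ∀ j, Szo4 d (Pi.single k 1) j = 0 := fun j => zo4_simplex d _
        (fun i => by by_cases h : i = k <;> simp [Pi.single_apply, h]) (by simp) j
      simp only [Lzo4, hτ, hz, add_zero, mul_sub, mul_one, Finset.sum_sub_distrib, h1]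
      simp [Pi.single_apply, hk]
end

section
/- Let m ≥ 2 and let C = (c_{jk}) be a cost matrix. For τ ∈ ℝ^{m−1} let τ† = (τ_1, …, τ_{m−1}, 1 − Σ_{k=1}^{m−1} max(τ_k,0)) ∈ ℝ^m. Then for every η ∈ Δ_m, every τ ∈ ℝ^{m−1}, and every index l ∈ {1,…,m} with τ†_l = max_{j∈{1,…,m}} τ†_j: (1/m) · ( Σ_{j=1}^m η_j c_{jl} − min_{k∈{1,…,m}} Σ_{j=1}^m η_j c_{jk} ) ≤ Σ_{j=1}^m η_j L^{cw3}(j, τ) − min_{k∈{1,…,m}} Σ_{j=1}^m η_j c_{jk}. -/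
open Finset

/-- The hinge-like loss `L^{cw3}` (see Statement 7 context). -/
noncomputable def Lcw3 (d : ℕ) (C : Fin (d + 1) → Fin (d + 1) → ℝ)
    (j : Fin (d + 1)) (τ : Fin d → ℝ) : ℝ :=
  Fin.lastCases
    (∑ k : Fin d, C (Fin.last d) k.castSucc * max (τ k) 0)
    (fun j' => C j'.castSucc (Fin.last d) *
        max (1 - τ j' - ∑ k ∈ Finset.univ.erase j', max (τ k) 0) 0
      + ∑ k ∈ Finset.univ.erase j', C j'.castSucc k.castSucc * max (τ k) 0)
    j

/-- `τ† = (τ_1, …, τ_{m-1}, 1 - Σ_k max(τ_k,0))`. -/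
noncomputable def tauDag (d : ℕ) (τ : Fin d → ℝ) : Fin (d + 1) → ℝ :=
  Fin.snoc τ (1 - ∑ i, max (τ i) 0)

theorem stmt9 (d : ℕ) (hd : 1 ≤ d) (C : Fin (d + 1) → Fin (d + 1) → ℝ)
    (hC0 : ∀ j, C j j = 0) (hCnn : ∀ j k, 0 ≤ C j k)
    (hCpos : ∀ j, ∃ k, k ≠ j ∧ 0 < C j k)
    (η : Fin (d + 1) → ℝ) (hη0 : ∀ j, 0 ≤ η j) (hη1 : ∑ j, η j = 1)
    (τ : Fin d → ℝ) (l : Fin (d + 1))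
    (hl : ∀ j, tauDag d τ j ≤ tauDag d τ l) :
    (1 / ((d : ℝ) + 1)) * (∑ j, η j * C j l - ⨅ k, ∑ j, η j * C j k) ≤
      ∑ j, η j * Lcw3 d C j τ - ⨅ k, ∑ j, η j * C j k := by
  set M := ⨅ k, ∑ j, η j * C j k with hM
  set q : Fin (d + 1) → ℝ := fun k => max (tauDag d τ k) 0 with hq
  have hq0 : ∀ k, 0 ≤ q k := fun k => le_max_right _ _
  have hqc : ∀ k : Fin d, q k.castSucc = max (τ k) 0 := by
    intro k; simp [hq, tauDag]
  have hql : q (Fin.last d) = max (1 - ∑ i, max (τ i) 0) 0 := by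
    simp [hq, tauDag]
  have hM0 : 0 ≤ M := Real.iInf_nonneg fun k =>
    Finset.sum_nonneg fun j _ => mul_nonneg (hη0 j) (hCnn j k)
  have hMle : ∀ k, M ≤ ∑ j, η j * C j k := fun k =>
    ciInf_le (Set.finite_range _).bddBelow k
  have hsum : 1 ≤ ∑ k, q k := by
    rw [Fin.sum_univ_castSucc, hql]
    simp only [hqc]
    have := le_max_left (1 - ∑ i, max (τ i) 0) 0
    linarith
  have hdpos : (0 : ℝ) < (d : ℝ) + 1 := by positivity
  have hlq : 1 / ((d : ℝ) + 1) ≤ q l := by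
    have hle : ∑ k, q k ≤ ∑ _k : Fin (d + 1), q l :=
      Finset.sum_le_sum fun k _ => max_le_max (hl k) le_rfl
    simp only [Finset.sum_const, Finset.card_univ, Fintype.card_fin, nsmul_eq_mul] at hle
    push_cast at hle
    rw [div_le_iff₀ hdpos]
    linarith
  have hL : ∀ j, ∑ k, C j k * q k ≤ Lcw3 d C j τ := by
    intro j
    rw [Fin.sum_univ_castSucc]
    simp only [hqc]
    induction j using Fin.lastCases with
    | last => simp [Lcw3, hC0]
    | cast j =>
      simp only [Lcw3, Fin.lastCases_castSucc]
      rw [← Finset.add_sum_erase _ _ (Finset.mem_univ j), hC0, hql]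
      have h1 := Finset.add_sum_erase Finset.univ (fun i => max (τ i) 0) (Finset.mem_univ j)
      have h2 : max (1 - ∑ i, max (τ i) 0) 0 ≤
          max (1 - τ j - ∑ k ∈ Finset.univ.erase j, max (τ k) 0) 0 := by
        apply max_le_max _ le_rfl
        have := le_max_left (τ j) 0
        linarith
      have h3 := mul_le_mul_of_nonneg_left h2 (hCnn j.castSucc (Fin.last d))
      linarith
  have hR : ∑ k, q k * (∑ j, η j * C j k) ≤ ∑ j, η j * Lcw3 d C j τ := by
    calc ∑ k, q k * (∑ j, η j * C j k) = ∑ j, η j * ∑ k, C j k * q k := by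
          simp only [Finset.mul_sum]
          rw [Finset.sum_comm]
          refine Finset.sum_congr rfl fun j _ => Finset.sum_congr rfl fun k _ => by ring
      _ ≤ _ := Finset.sum_le_sum fun j _ => mul_le_mul_of_nonneg_left (hL j) (hη0 j)
  have h4 : q l * (∑ j, η j * C j l - M) ≤ ∑ k, q k * (∑ j, η j * C j k - M) :=
    Finset.single_le_sum (f := fun k => q k * (∑ j, η j * C j k - M))
      (fun k _ => mul_nonneg (hq0 k) (sub_nonneg.2 (hMle k))) (Finset.mem_univ l)
  have h5 : ∑ k, q k * (∑ j, η j * C j k - M) =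
      ∑ k, q k * (∑ j, η j * C j k) - (∑ k, q k) * M := by
    simp only [mul_sub, Finset.sum_sub_distrib, Finset.sum_mul]
  have h6 := mul_le_mul_of_nonneg_right hsum hM0
  have h7 := mul_le_mul_of_nonneg_right hlq (sub_nonneg.2 (hMle l))
  linarith
end

section
/- Let m ≥ 2. Then for every η ∈ Δ_m, every τ ∈ ℝ^{m−1}, and every index l ∈ {1,…,m} with τ̃_l = max_{j∈{1,…,m}} τ̃_j (where τ̃ = (τ_1, …, τ_{m−1}, 1 − Σ_{k=1}^{m−1} τ_k)): (1/m) · ( max_{j∈{1,…,m}} η_j − η_l ) ≤ Σ_{j=1}^m η_j L^{zo4}(j, τ) − (1 − max_{j∈{1,…,m}} η_j). -/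
open Finset

theorem S_ge (d : ℕ) (t : Fin (d + 1) → ℝ) (j : Fin (d + 1)) :
    0 ≤ Szo4 d t j ∧ ∀ A : Finset (Fin (d + 1)), j ∉ A → A.card ≤ d - 1 →
      (t j + ∑ k ∈ A, t k - 1) / (A.card + 1) ≤ Szo4 d t j := by
  have hb : BddAbove (insert 0 {x : ℝ | ∃ A : Finset (Fin (d + 1)),
    A ⊆ Finset.univ.erase j ∧ A.card ≤ d - 1 ∧
    x = (t j + ∑ k ∈ A, t k - 1) / (A.card + 1)}) := by
    apply Set.Finite.bddAbove
    apply Set.Finite.insert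
    apply (Set.finite_range (fun A : Finset (Fin (d + 1)) =>
      (t j + ∑ k ∈ A, t k - 1) / ((A.card : ℝ) + 1))).subset
    rintro x ⟨A, -, -, rfl⟩
    exact ⟨A, rfl⟩
  refine ⟨le_csSup hb (Set.mem_insert _ _), fun A hA hc => le_csSup hb (Set.mem_insert_of_mem _
    ⟨A, ?_, hc, rfl⟩)⟩
  intro x hx
  simp only [Finset.mem_erase, Finset.mem_univ, and_true]
  rintro rfl
  exact hA hx

theorem exists_theta (d : ℕ) (t : Fin (d + 1) → ℝ) (ht : ∑ j, t j = 1) (l : Fin (d + 1))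
    (hl : ∀ j, t j ≤ t l) : ∃ θ : ℝ, 0 ≤ θ ∧ ∑ j, max (t j - θ) 0 = 1 := by
  have hc : Continuous (fun θ : ℝ => ∑ j, max (t j - θ) 0) := by fun_prop
  have hl0 : 0 ≤ t l := by
    by_contra h
    push Not at h
    have : ∑ j, t j ≤ 0 := Finset.sum_nonpos fun j _ => (hl j).trans h.le
    linarith
  have h1 : (1 : ℝ) ≤ ∑ j, max (t j - 0) 0 := by
    rw [← ht]
    exact Finset.sum_le_sum fun j _ => by simp
  have h2 : ∑ j, max (t j - t l) 0 = 0 :=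
    Finset.sum_eq_zero fun j _ => max_eq_right (by linarith [hl j])
  obtain ⟨θ, hθ, h⟩ := intermediate_value_Icc' hl0 hc.continuousOn
    (show (1 : ℝ) ∈ Set.Icc _ _ from ⟨by simp only [h2]; norm_num, h1⟩)
  exact ⟨θ, hθ.1, h⟩

theorem key (d : ℕ) (t : Fin (d + 1) → ℝ) (ht : ∑ j, t j = 1) (θ : ℝ) (h0 : 0 ≤ θ)
    (hθ : ∑ j, max (t j - θ) 0 = 1) (j : Fin (d + 1)) :
    t j - Szo4 d t j ≤ max (t j - θ) 0 := by
  classical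
  obtain ⟨hS0, hS⟩ := S_ge d t j
  set K : Finset (Fin (d + 1)) := Finset.univ.filter (fun i => θ < t i) with hK
  have hKs : ∑ i ∈ K, t i = 1 + K.card * θ := by
    have : ∑ i, max (t i - θ) 0 = ∑ i ∈ K, (t i - θ) := by
      rw [hK, Finset.sum_filter]
      refine Finset.sum_congr rfl fun i _ => ?_
      split_ifs with h
      · exact max_eq_left (by linarith)
      · exact max_eq_right (by linarith)
    rw [hθ, Finset.sum_sub_distrib, Finset.sum_const, nsmul_eq_mul] at this
    linarith
  have hcard : ∀ B : Finset (Fin (d + 1)), B ≠ Finset.univ → B.card ≤ d := by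
    intro B hB
    have h1 := Finset.card_lt_univ_of_notMem (s := B)
      (Classical.not_forall.1 (fun h => hB (Finset.eq_univ_iff_forall.2 h))).choose_spec
    simp at h1
    omega
  by_cases hj : θ < t j
  · rw [max_eq_left (by linarith)]
    have hjK : j ∈ K := by simp [hK, hj]
    by_cases hu : K = Finset.univ
    · rw [hu, ht] at hKs
      simp only [Finset.card_univ, Fintype.card_fin] at hKs
      push_cast at hKs
      have : (0 : ℝ) ≤ d * θ := by positivity
      have : θ = 0 := by nlinarith
      linarith
    · have hk := hcard K hu
      have hp : 0 < K.card := Finset.card_pos.2 ⟨j, hjK⟩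
      have h := hS (K.erase j) (Finset.notMem_erase _ _)
        (by rw [Finset.card_erase_of_mem hjK]; omega)
      rw [Finset.add_sum_erase _ _ hjK, hKs] at h
      have hc : ((K.erase j).card : ℝ) + 1 = K.card := by
        exact_mod_cast Finset.card_erase_add_one hjK
      rw [hc] at h
      have hp' : (0 : ℝ) < K.card := by exact_mod_cast hp
      have : (1 + K.card * θ - 1) / (K.card : ℝ) = θ := by field_simp; ring
      linarith
  · rw [max_eq_right (by linarith)]
    have hjK : j ∉ K := by simp [hK]; linarith
    by_cases hj0 : t j ≤ 0
    · linarith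
    have hne : insert j K ≠ Finset.univ := by
      intro h
      have h2 := Finset.sum_insert (f := t) hjK
      rw [h, ht, hKs] at h2
      have : (0 : ℝ) ≤ K.card * θ := mul_nonneg (Nat.cast_nonneg _) h0
      linarith
    have hk := hcard _ hne
    rw [Finset.card_insert_of_notMem hjK] at hk
    have h := hS K hjK (by omega)
    have : t j ≤ (t j + ∑ k ∈ K, t k - 1) / (K.card + 1) := by
      rw [le_div_iff₀ (by positivity), hKs]
      have : (K.card : ℝ) * t j ≤ K.card * θ := by gcongr; linarith
      linarith
    linarith

theorem stmt10 (d : ℕ) (hd : 1 ≤ d)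
    (η : Fin (d + 1) → ℝ) (hη0 : ∀ j, 0 ≤ η j) (hη1 : ∑ j, η j = 1)
    (τ : Fin d → ℝ) (l : Fin (d + 1))
    (hl : ∀ j, tauTilde d τ j ≤ tauTilde d τ l) :
    (1 / ((d : ℝ) + 1)) * ((⨆ j, η j) - η l) ≤
      ∑ j, η j * Lzo4 d j τ - (1 - ⨆ j, η j) := by
  set t := tauTilde d τ with htdef
  have ht : ∑ j, t j = 1 := by
    rw [htdef, Fin.sum_univ_castSucc]
    simp [tauTilde]
  obtain ⟨θ, h0, hθ⟩ := exists_theta d t ht l hl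
  set M := ⨆ j, η j with hM
  have hMj : ∀ j, η j ≤ M := fun j => le_ciSup (Set.finite_range η).bddAbove j
  have hu : 1 / ((d : ℝ) + 1) ≤ max (t l - θ) 0 := by
    rw [div_le_iff₀ (by positivity)]
    have : ∑ j, max (t j - θ) 0 ≤ ∑ _j : Fin (d + 1), max (t l - θ) 0 :=
      Finset.sum_le_sum fun j _ => max_le_max (by linarith [hl j]) le_rfl
    rw [hθ] at this
    simp only [Finset.sum_const, Finset.card_univ, Fintype.card_fin, nsmul_eq_mul] at this
    push_cast at this
    linarith
  have hA : (1 / ((d : ℝ) + 1)) * (M - η l) ≤ ∑ j, max (t j - θ) 0 * (M - η j) :=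
    (mul_le_mul_of_nonneg_right hu (by linarith [hMj l])).trans
      (Finset.single_le_sum (f := fun j => max (t j - θ) 0 * (M - η j))
        (fun j _ => mul_nonneg (le_max_right _ _) (by linarith [hMj j])) (Finset.mem_univ l))
  have hB : ∑ j, max (t j - θ) 0 * (M - η j) = M - ∑ j, η j * max (t j - θ) 0 := by
    simp only [mul_sub, Finset.sum_sub_distrib, ← Finset.sum_mul, hθ, one_mul]
    simp only [mul_comm]
  have hC : 1 - ∑ j, η j * max (t j - θ) 0 ≤ ∑ j, η j * Lzo4 d j τ := by
    rw [← hη1, ← Finset.sum_sub_distrib]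
    refine Finset.sum_le_sum fun j _ => ?_
    have := mul_le_mul_of_nonneg_left (key d t ht θ h0 hθ j) (hη0 j)
    unfold Lzo4
    rw [← htdef]
    linarith
  linarith
end

section
/- Let m ≥ 2, let A be a nonempty set, and let L : {1,…,m} × A → ℝ be a loss. Define R_L = { z ∈ ℝ^m : there exists γ ∈ A with z_j = L(j, γ) for all j }, the value manifold S_L = closure of the convex hull of R_L, S^{zo} = { z ∈ ℝ^m : Σ_{j=1}^m z_j = m − 1 and 0 ≤ z_j ≤ 1 for all j }, and S^{zo*} = S^{zo} + ℝ_{≥0}^m = { z + b : z ∈ S^{zo}, b ∈ ℝ^m with b_j ≥ 0 for all j }. Then the following are equivalent: (a) for every η ∈ Δ_m, inf_{γ ∈ A} Σ_{j=1}^m η_j L(j, γ) = 1 − max_{k∈{1,…,m}} η_k; (b) S^{zo} ⊆ S_L and S_L ⊆ S^{zo*}. -/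
open Finset

lemma half_aux {n : ℕ} (R : Set (Fin n → ℝ)) (η : Fin n → ℝ) (c : ℝ)
    (h : ∀ x ∈ R, c ≤ ∑ j, η j * x j) :
    ∀ x ∈ closure (convexHull ℝ R), c ≤ ∑ j, η j * x j := by
  have hcl : IsClosed {x : Fin n → ℝ | c ≤ ∑ j, η j * x j} :=
    isClosed_le continuous_const (by fun_prop)
  have hcv : Convex ℝ {x : Fin n → ℝ | c ≤ ∑ j, η j * x j} := by
    intro x hx y hy a b ha hb hab
    simp only [Set.mem_setOf_eq, Pi.add_apply, Pi.smul_apply, smul_eq_mul] at *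
    have e : ∑ j, η j * (a * x j + b * y j)
        = a * ∑ j, η j * x j + b * ∑ j, η j * y j := by
      rw [Finset.mul_sum, Finset.mul_sum, ← Finset.sum_add_distrib]
      exact Finset.sum_congr rfl fun j _ => by ring
    rw [e]
    have : c = a * c + b * c := by rw [← add_mul, hab, one_mul]
    rw [this]
    gcongr
  exact fun x hx => (closure_minimal (convexHull_min h hcv) hcl) hx

lemma zo_of_half (d : ℕ) (hd : 1 ≤ d) (x : Fin (d + 1) → ℝ)
    (h : ∀ η : Fin (d + 1) → ℝ, (∀ j, 0 ≤ η j) → ∑ j, η j = 1 →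
      1 - ⨆ k, η k ≤ ∑ j, η j * x j) :
    ∃ z : Fin (d + 1) → ℝ, (∑ j, z j = (d : ℝ) ∧ ∀ j, 0 ≤ z j ∧ z j ≤ 1) ∧
            ∃ b : Fin (d + 1) → ℝ, (∀ j, 0 ≤ b j) ∧ x = z + b := by
  have hx0 : ∀ j, 0 ≤ x j := by
    intro j
    have h1 := h (Pi.single j 1) (fun i => by
      by_cases hi : i = j
      · subst hi; simp
      · simp [hi]) (by simp)
    have h2 : (⨆ k, (Pi.single j (1:ℝ) : Fin (d+1) → ℝ) k) ≤ 1 := ciSup_le fun i => by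
      by_cases hi : i = j
      · subst hi; simp
      · simp [hi]
    have h3 : ∑ i, (Pi.single j (1:ℝ) : Fin (d+1) → ℝ) i * x i = x j := by
      simp [Pi.single_apply]
    linarith
  have hsum : (d : ℝ) ≤ ∑ j, min (x j) 1 := by
    set T : Finset (Fin (d+1)) := Finset.univ.filter fun j => x j < 1 with hT
    have e1 : ∑ j, min (x j) 1 = ∑ j, ((if x j < 1 then x j - 1 else 0) + 1) := by
      refine Finset.sum_congr rfl fun j _ => ?_
      split_ifs with hj
      · rw [min_eq_left hj.le]; ring
      · rw [min_eq_right (not_lt.1 hj)]; ring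
    rw [e1, Finset.sum_add_distrib, ← Finset.sum_filter, Finset.sum_sub_distrib]
    simp only [Finset.sum_const, Finset.card_univ, Fintype.card_fin, nsmul_eq_mul, mul_one]
    rw [← hT]
    push_cast
    rcases T.eq_empty_or_nonempty with h0 | h0
    · rw [h0]; simp
    have hc : (0:ℝ) < T.card := by exact_mod_cast h0.card_pos
    have h1 := h (fun j => if x j < 1 then (T.card : ℝ)⁻¹ else 0)
      (fun j => by split_ifs <;> positivity)
      (by rw [← Finset.sum_filter, ← hT]; simp; field_simp)
    have h2 : (⨆ j, (if x j < 1 then (T.card : ℝ)⁻¹ else 0)) ≤ (T.card : ℝ)⁻¹ :=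
      ciSup_le fun j => by split_ifs <;> [exact le_rfl; positivity]
    have h3 : ∑ j, (if x j < 1 then (T.card : ℝ)⁻¹ else 0) * x j
        = (T.card : ℝ)⁻¹ * ∑ j ∈ T, x j := by
      rw [Finset.mul_sum, hT, Finset.sum_filter]
      exact Finset.sum_congr rfl fun j _ => by split_ifs <;> simp
    rw [h3] at h1
    have h4 : 1 - (T.card : ℝ)⁻¹ ≤ (T.card : ℝ)⁻¹ * ∑ j ∈ T, x j := by linarith
    have h5 := mul_le_mul_of_nonneg_left h4 hc.le
    rw [mul_inv_cancel_left₀ hc.ne', mul_sub, mul_inv_cancel₀ hc.ne'] at h5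
    linarith
  have hd' : (1:ℝ) ≤ d := by exact_mod_cast hd
  set s := ∑ j, min (x j) 1 with hs
  have hspos : 0 < s := by linarith
  have ht0 : 0 ≤ (d:ℝ) / s := by positivity
  have ht1 : (d:ℝ) / s ≤ 1 := (div_le_one hspos).2 hsum
  have hy0 : ∀ j, 0 ≤ min (x j) 1 := fun j => le_min (hx0 j) zero_le_one
  have hle : ∀ j, (d:ℝ) / s * min (x j) 1 ≤ min (x j) 1 :=
    fun j => mul_le_of_le_one_left (hy0 j) ht1
  refine ⟨fun j => (d:ℝ) / s * min (x j) 1, ⟨?_, fun j => ⟨mul_nonneg ht0 (hy0 j),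
    (hle j).trans (min_le_right _ _)⟩⟩, fun j => x j - (d:ℝ) / s * min (x j) 1, fun j => ?_, ?_⟩
  · rw [← Finset.mul_sum, ← hs, div_mul_cancel₀ _ hspos.ne']
  · exact sub_nonneg.2 ((hle j).trans (min_le_left _ _))
  · ext j; simp

lemma zo_lower (d : ℕ) (η z : Fin (d + 1) → ℝ) (hη1 : ∑ j, η j = 1)
    (hz : ∑ j, z j = (d : ℝ) ∧ ∀ j, 0 ≤ z j ∧ z j ≤ 1) :
    1 - ⨆ k, η k ≤ ∑ j, η j * z j := by
  have hb : ∀ j, η j ≤ ⨆ k, η k := fun j => le_ciSup (Set.finite_range η).bddAbove j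
  have h1 : ∑ j, η j * (1 - z j) ≤ ∑ j, (⨆ k, η k) * (1 - z j) :=
    Finset.sum_le_sum fun j _ =>
      mul_le_mul_of_nonneg_right (hb j) (sub_nonneg.2 (hz.2 j).2)
  rw [← Finset.mul_sum, Finset.sum_sub_distrib, hz.1] at h1
  simp only [mul_sub, mul_one, Finset.sum_sub_distrib, hη1, Finset.sum_const, Finset.card_univ,
    Fintype.card_fin, nsmul_eq_mul] at h1
  push_cast at h1
  linarith

theorem stmt11 (d : ℕ) (hd : 1 ≤ d) (A : Type) [Nonempty A]
    (L : Fin (d + 1) → A → ℝ) :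
    -- (a) the generalized entropy of L is the zero-one entropy …
    (∀ η : Fin (d + 1) → ℝ, (∀ j, 0 ≤ η j) → ∑ j, η j = 1 →
      IsGLB {x : ℝ | ∃ γ : A, x = ∑ j, η j * L j γ} (1 - ⨆ k, η k))
    ↔
    -- (b) … iff S^{zo} ⊆ S_L ⊆ S^{zo*}
    (({z : Fin (d + 1) → ℝ | ∑ j, z j = (d : ℝ) ∧ ∀ j, 0 ≤ z j ∧ z j ≤ 1} ⊆
        closure (convexHull ℝ
          {z : Fin (d + 1) → ℝ | ∃ γ : A, ∀ j, z j = L j γ}))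
      ∧
      (closure (convexHull ℝ {z : Fin (d + 1) → ℝ | ∃ γ : A, ∀ j, z j = L j γ}) ⊆
        {x : Fin (d + 1) → ℝ |
          ∃ z : Fin (d + 1) → ℝ, (∑ j, z j = (d : ℝ) ∧ ∀ j, 0 ≤ z j ∧ z j ≤ 1) ∧
            ∃ b : Fin (d + 1) → ℝ, (∀ j, 0 ≤ b j) ∧ x = z + b})) := by
  set R : Set (Fin (d+1) → ℝ) := {z : Fin (d + 1) → ℝ | ∃ γ : A, ∀ j, z j = L j γ} with hR
  have hdpos : (0:ℝ) < (d:ℝ) + 2 := by positivity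
  constructor
  · intro h
    have hhalf : ∀ x ∈ closure (convexHull ℝ R), ∀ η : Fin (d + 1) → ℝ, (∀ j, 0 ≤ η j) →
        ∑ j, η j = 1 → 1 - ⨆ k, η k ≤ ∑ j, η j * x j := by
      intro x hx η h0 h1
      refine half_aux R η _ ?_ x hx
      rintro y ⟨γ, hγ⟩
      exact (h η h0 h1).1 ⟨γ, by simp [hγ]⟩
    have hsub := fun x hx => zo_of_half d hd x (hhalf x hx)
    refine ⟨?_, hsub⟩
    have hvert : ∀ k, (fun j => if j = k then (0:ℝ) else 1) ∈ closure (convexHull ℝ R) := by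
      intro k
      rw [← closure_closure, Metric.mem_closure_iff]
      intro ε hε
      set η : Fin (d+1) → ℝ := fun j => ((if j = k then 1 else 0) + 1) / ((d:ℝ) + 2) with hη
      have hη0 : ∀ j, 0 ≤ η j := fun j => by
        simp only [hη]; split_ifs <;> positivity
      have hη1 : ∑ j, η j = 1 := by
        simp only [hη, ← Finset.sum_div, Finset.sum_add_distrib]
        simp
        field_simp
        ring
      have hg := h η hη0 hη1
      have hsup : (⨆ j, η j) = 2 / ((d:ℝ) + 2) := by
        apply le_antisymm
        · refine ciSup_le fun j => ?_
          simp only [hη]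
          gcongr
          split_ifs <;> norm_num
        · refine le_trans ?_ (le_ciSup (Set.finite_range η).bddAbove k)
          simp only [hη]; norm_num
      have hδ : 0 < ε / 2 / ((d:ℝ) + 2) := by positivity
      obtain ⟨y, ⟨γ, hy⟩, hlt⟩ : ∃ y ∈ {x : ℝ | ∃ γ : A, x = ∑ j, η j * L j γ},
          y < (1 - ⨆ k, η k) + ε / 2 / ((d:ℝ) + 2) := by
        by_contra! hcon
        have := hg.2 (fun y hy => hcon y hy)
        linarith
      have hmem : (fun j => L j γ) ∈ closure (convexHull ℝ R) :=
        subset_closure (subset_convexHull ℝ R ⟨γ, fun j => rfl⟩)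
      refine ⟨_, hmem, ?_⟩
      obtain ⟨z, ⟨hz1, hz⟩, b, hb, hxz⟩ := hsub _ hmem
      have hL : ∀ j, L j γ = z j + b j := fun j => congrFun hxz j
      have hval : ∑ j, η j * L j γ = (z k + b k + d + ∑ j, b j) / ((d:ℝ) + 2) := by
        have : ∀ j, η j * L j γ
            = ((if j = k then z j + b j else 0) + z j + b j) / ((d:ℝ) + 2) := fun j => by
          rw [hL]; simp only [hη]; split_ifs <;> ring
        simp only [this, ← Finset.sum_div, Finset.sum_add_distrib, hz1]
        simp
      have hmain : z k + b k + ∑ j, b j < ε / 2 := by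
        rw [hy, hval, hsup] at hlt
        have e : 1 - 2 / ((d:ℝ) + 2) + ε / 2 / ((d:ℝ) + 2) = (d + ε / 2) / ((d:ℝ) + 2) := by
          field_simp
          ring
        rw [e, div_lt_div_iff_of_pos_right hdpos] at hlt
        linarith
      have hbs : ∀ j, b j ≤ ∑ i, b i := fun j =>
        Finset.single_le_sum (fun i _ => hb i) (Finset.mem_univ j)
      have hzs : ∀ j, j ≠ k → 1 - z j ≤ z k := by
        intro j hj
        have h1 : ∑ i ∈ ({j, k} : Finset (Fin (d+1))), (1 - z i) ≤ ∑ i, (1 - z i) :=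
          Finset.sum_le_sum_of_subset_of_nonneg (Finset.subset_univ _)
            fun i _ _ => sub_nonneg.2 (hz i).2
        rw [Finset.sum_pair hj, Finset.sum_sub_distrib, hz1] at h1
        simp at h1
        linarith
      refine lt_of_le_of_lt ((dist_pi_le_iff (by positivity : (0:ℝ) ≤ ε / 2)).2 fun j => ?_)
        (half_lt_self hε)
      rw [Real.dist_eq, abs_le]
      try dsimp only
      rw [hL]
      have b1 := hbs j
      have b2 := hb j
      have b3 := hb k
      have b4 := hz k
      have b5 := hz j
      split_ifs with hj
      · subst hj
        constructor <;> linarith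
      · have b6 := hzs j hj
        constructor <;> linarith
    rintro z ⟨hz1, hz⟩
    have hcv : Convex ℝ (closure (convexHull ℝ R)) := (convex_convexHull ℝ R).closure
    have := hcv.sum_mem (t := Finset.univ) (w := fun k => 1 - z k)
      (z := fun k => (fun j => if j = k then (0:ℝ) else 1))
      (fun k _ => sub_nonneg.2 (hz k).2)
      (by rw [Finset.sum_sub_distrib, hz1]; simp) (fun k _ => hvert k)
    convert this using 1
    ext j
    have e : ∀ k, (1 - z k) * (if j = k then (0:ℝ) else 1)
        = (1 - z k) - (if j = k then 1 - z k else 0) := fun k => by split_ifs <;> ring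
    simp only [Finset.sum_apply, Pi.smul_apply, smul_eq_mul, e, Finset.sum_sub_distrib, hz1]
    simp
  · rintro ⟨h1, h2⟩ η hη0 hη1
    constructor
    · rintro y ⟨γ, rfl⟩
      obtain ⟨z, hz, b, hb, hxz⟩ := h2 (subset_closure (subset_convexHull ℝ R
        (show (fun j => L j γ) ∈ R from ⟨γ, fun j => rfl⟩)))
      refine (zo_lower d η z hη1 hz).trans (Finset.sum_le_sum fun j _ => ?_)
      have : L j γ = z j + b j := congrFun hxz j
      rw [this]
      exact mul_le_mul_of_nonneg_left (by linarith [hb j]) (hη0 j)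
    · intro c hc
      obtain ⟨k, hk⟩ := exists_eq_ciSup_of_finite (f := η)
      have hv : (fun j => if j = k then (0:ℝ) else 1) ∈ closure (convexHull ℝ R) := by
        apply h1
        constructor
        · have e : ∀ j, (if j = k then (0:ℝ) else 1) = 1 - (if j = k then 1 else 0) :=
            fun j => by split_ifs <;> norm_num
          simp only [e, Finset.sum_sub_distrib]
          simp
        · intro j
          dsimp only
          split_ifs <;> norm_num
      have := half_aux R η c (by
        rintro y ⟨γ, hγ⟩
        exact hc ⟨γ, by simp [hγ]⟩) _ hv
      have e : ∀ j, η j * (if j = k then (0:ℝ) else 1) = η j - (if j = k then η j else 0) :=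
        fun j => by split_ifs <;> ring
      simp only [e, Finset.sum_sub_distrib, hη1] at this
      simp at this
      rw [← hk]
      linarith
end

section
/- Let m ≥ 2, let A be a nonempty set, and let L : {1,…,m} × A → ℝ be a loss whose generalized entropy equals that of the zero-one loss, i.e. for every η ∈ Δ_m, inf_{γ ∈ A} Σ_{j=1}^m η_j L(j, γ) = 1 − max_{k∈{1,…,m}} η_k. Then for every η ∈ Δ_m, every γ ∈ A, and every index k ∈ {1,…,m} with L(k, γ) = min_{j∈{1,…,m}} L(j, γ): (1/m) · ( max_{j∈{1,…,m}} η_j − η_k ) ≤ Σ_{j=1}^m η_j L(j, γ) − (1 − max_{j∈{1,…,m}} η_j). -/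
open Finset

theorem stmt12 (d : ℕ) (hd : 1 ≤ d) (A : Type) [Nonempty A]
    (L : Fin (d + 1) → A → ℝ)
    -- the generalized entropy of L equals the zero-one entropy
    (hH : ∀ η : Fin (d + 1) → ℝ, (∀ j, 0 ≤ η j) → ∑ j, η j = 1 →
      IsGLB {x : ℝ | ∃ γ : A, x = ∑ j, η j * L j γ} (1 - ⨆ k, η k)) :
    ∀ η : Fin (d + 1) → ℝ, (∀ j, 0 ≤ η j) → ∑ j, η j = 1 →
    ∀ γ : A, ∀ k : Fin (d + 1), (∀ j, L k γ ≤ L j γ) →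
      (1 / ((d : ℝ) + 1)) * ((⨆ j, η j) - η k) ≤
        ∑ j, η j * L j γ - (1 - ⨆ j, η j) := by
  intro η h0 h1 γ k hk
  have hm : (0:ℝ) < (d:ℝ) + 1 := by positivity
  set M := ⨆ j, η j with hM
  have hle : ∀ j, η j ≤ M := fun j => le_ciSup (Set.finite_range η).bddAbove j
  have hM0 : 0 ≤ M := (h0 k).trans (hle k)
  have hsum : ∑ j, η j * L j γ = 1 - ∑ j, η j * (1 - L j γ) := by
    simp only [mul_sub, mul_one, Finset.sum_sub_distrib, h1]; ring
  rw [hsum]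
  by_cases hq : 1 / ((d:ℝ) + 1) ≤ 1 - L k γ
  · have hqk : 0 < 1 - L k γ := lt_of_lt_of_le (by positivity) hq
    let S : Finset (Fin (d+1)) := Finset.univ.filter (fun j => 0 < 1 - L j γ)
    have hkS : k ∈ S := by simp only [S, Finset.mem_filter, Finset.mem_univ, true_and]; exact hqk
    have hc : (0:ℝ) < (S.card : ℝ) := by exact_mod_cast Finset.card_pos.mpr ⟨k, hkS⟩
    have hS : ∑ j ∈ S, (1 - L j γ) ≤ 1 := by
      have hb := (hH (fun j => if j ∈ S then 1 / (S.card:ℝ) else 0)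
        (fun j => by split_ifs <;> positivity)
        (by rw [Finset.sum_ite_mem, Finset.univ_inter, Finset.sum_const, nsmul_eq_mul]
            field_simp)).1 ⟨γ, rfl⟩
      have hs : (⨆ j, (if j ∈ S then 1 / (S.card:ℝ) else 0)) ≤ 1 / (S.card:ℝ) :=
        ciSup_le (fun j => by split_ifs <;> [exact le_rfl; positivity])
      have he : ∑ j, (if j ∈ S then 1 / (S.card:ℝ) else 0) * L j γ
          = (1 / (S.card:ℝ)) * ∑ j ∈ S, L j γ := by
        simp only [ite_mul, zero_mul]
        rw [Finset.sum_ite_mem, Finset.univ_inter, Finset.mul_sum]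
      rw [he] at hb
      have h3 : 1 - 1 / (S.card:ℝ) ≤ (1 / (S.card:ℝ)) * ∑ j ∈ S, L j γ := by linarith
      have h4 := mul_le_mul_of_nonneg_left h3 hc.le
      have h5 : (S.card:ℝ) * (1 - 1 / (S.card:ℝ)) = S.card - 1 := by field_simp
      have h6 : (S.card:ℝ) * ((1 / (S.card:ℝ)) * ∑ j ∈ S, L j γ) = ∑ j ∈ S, L j γ := by
        field_simp
      rw [h5, h6] at h4
      rw [Finset.sum_sub_distrib, Finset.sum_const, nsmul_eq_mul]
      linarith
    have hA : ∑ j, η j * (1 - L j γ) ≤ ∑ j ∈ S, η j * (1 - L j γ) := by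
      rw [Finset.sum_filter]
      apply Finset.sum_le_sum
      intro j _
      split_ifs with h
      · exact le_rfl
      · exact mul_nonpos_of_nonneg_of_nonpos (h0 j) (not_lt.mp h)
    rw [← Finset.add_sum_erase S _ hkS] at hA hS
    have hB : ∑ j ∈ S.erase k, η j * (1 - L j γ) ≤ M * ∑ j ∈ S.erase k, (1 - L j γ) := by
      rw [Finset.mul_sum]
      apply Finset.sum_le_sum
      intro j hj
      have hj' := (Finset.mem_filter.mp (Finset.mem_of_mem_erase hj)).2
      exact mul_le_mul_of_nonneg_right (hle j) hj'.le
    have hC := mul_le_mul_of_nonneg_left hS hM0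
    have hD := mul_le_mul_of_nonneg_right hq (sub_nonneg.mpr (hle k))
    linarith
  · have hq' := (not_le.mp hq).le
    have hA : ∑ j, η j * (1 - L j γ) ≤ 1 / ((d:ℝ) + 1) := by
      calc _ ≤ ∑ j, η j * (1 / ((d:ℝ) + 1)) := by
            apply Finset.sum_le_sum
            intro j _
            exact mul_le_mul_of_nonneg_left (by linarith [hk j]) (h0 j)
        _ = _ := by rw [← Finset.sum_mul, h1, one_mul]
    have hB : 1 ≤ η k + d * M := by
      have := Finset.sum_le_card_nsmul (Finset.univ.erase k) η M (fun j _ => hle j)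
      rw [Finset.card_erase_of_mem (Finset.mem_univ k)] at this
      simp at this
      linarith
    have hC : 1 / ((d:ℝ) + 1) * (M - η k) ≤ M - 1 / ((d:ℝ) + 1) := by
      have : M - 1 / ((d:ℝ) + 1) = 1 / ((d:ℝ) + 1) * (((d:ℝ) + 1) * M - 1) := by field_simp
      rw [this]
      apply mul_le_mul_of_nonneg_left _ (by positivity)
      linarith
    linarith
end

section
/- Let m ≥ 2, let ν ≤ 0, and let f_0 : (0,∞) → ℝ be twice continuously differentiable with f_0''(t) = 2^{2ν} t^{ν−1} (1+t)^{−2ν−1} for all t > 0. Define H on the open positive orthant (0,∞)^m by H(q) = −Σ_{i=1}^m Σ_{j≠i} q_i f_0(q_j/q_i). Then for all η, q ∈ Δ_m with all coordinates positive: H(q) − H(η) − Σ_{i=1}^m (q_i − η_i) ∂_i H(q) ≥ ( Σ_{i=1}^m |η_i − q_i| )^2, where ∂_i H denotes the i-th partial derivative of H as a function on (0,∞)^m. -/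
open Finset

/-- The generalized entropy of the symmetrized pairwise scoring rule:
`H(q) = -Σ_i Σ_{j≠i} q_i f₀(q_j/q_i)`. -/
noncomputable def Hpw (d : ℕ) (f₀ : ℝ → ℝ) (q : Fin (d + 1) → ℝ) : ℝ :=
  -∑ i, ∑ j ∈ Finset.univ.erase i, q i * f₀ (q j / q i)

lemma aux_taylor (φ φ' φ'' : ℝ → ℝ) (K : ℝ)
    (h1 : ∀ s ∈ Set.Icc (0:ℝ) 1, HasDerivAt φ (φ' s) s)
    (h2 : ∀ s ∈ Set.Icc (0:ℝ) 1, HasDerivAt φ' (φ'' s) s)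
    (hK : ∀ s ∈ Set.Icc (0:ℝ) 1, 2 * K ≤ φ'' s) : K ≤ φ 1 - φ 0 - φ' 0 := by
  have m1 : MonotoneOn (fun s => φ' s - 2 * K * s) (Set.Icc 0 1) := by
    have hd : ∀ s ∈ Set.Icc (0:ℝ) 1,
        HasDerivAt (fun s => φ' s - 2 * K * s) (φ'' s - 2 * K) s := by
      intro s hs
      simpa using (h2 s hs).fun_sub ((hasDerivAt_id s).const_mul (2 * K))
    refine monotoneOn_of_deriv_nonneg (convex_Icc 0 1)
      (fun s hs => (hd s hs).continuousAt.continuousWithinAt) ?_ ?_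
    · intro s hs
      exact (hd s (interior_subset hs)).differentiableAt.differentiableWithinAt
    · intro s hs
      rw [(hd s (interior_subset hs)).deriv]
      linarith [hK s (interior_subset hs)]
  have m2 : MonotoneOn (fun s => φ s - φ' 0 * s - K * s ^ 2) (Set.Icc 0 1) := by
    have hd : ∀ s ∈ Set.Icc (0:ℝ) 1,
        HasDerivAt (fun s => φ s - φ' 0 * s - K * s ^ 2) (φ' s - φ' 0 - K * (2 * s)) s := by
      intro s hs
      simpa using ((h1 s hs).fun_sub ((hasDerivAt_id s).const_mul (φ' 0))).fun_sub
        ((hasDerivAt_pow 2 s).const_mul K)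
    refine monotoneOn_of_deriv_nonneg (convex_Icc 0 1)
      (fun s hs => (hd s hs).continuousAt.continuousWithinAt) ?_ ?_
    · intro s hs
      exact (hd s (interior_subset hs)).differentiableAt.differentiableWithinAt
    · intro s hs
      rw [(hd s (interior_subset hs)).deriv]
      have hs' := interior_subset hs
      have := m1 (Set.left_mem_Icc.2 zero_le_one) hs' hs'.1
      simp only at this
      linarith
  have := m2 (Set.left_mem_Icc.2 zero_le_one) (Set.right_mem_Icc.2 zero_le_one) zero_le_one
  simp only at this
  linarith

lemma aux_F (ν t : ℝ) (hν : ν ≤ 0) (ht : 0 < t) :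
    1 / (t * (1 + t)) ≤ (2 : ℝ) ^ (2 * ν) * t ^ (ν - 1) * (1 + t) ^ (-2 * ν - 1) := by
  have h1 : 0 < 1 + t := by linarith
  have e : (2 : ℝ) ^ (2 * ν) * t ^ (ν - 1) * (1 + t) ^ (-2 * ν - 1)
      = (4 * t / (1 + t) ^ 2) ^ ν * (1 / (t * (1 + t))) := by
    rw [Real.div_rpow (by positivity) (by positivity), Real.mul_rpow (by norm_num) ht.le,
      Real.rpow_sub_one ht.ne', Real.rpow_sub_one h1.ne', Real.rpow_mul (by norm_num),
      show -2 * ν = -(2 * ν) by ring, Real.rpow_neg h1.le, Real.rpow_mul h1.le]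
    norm_num
    field_simp
  rw [e]
  have : 1 ≤ (4 * t / (1 + t) ^ 2) ^ ν := by
    apply Real.one_le_rpow_of_pos_of_le_one_of_nonpos (by positivity) _ hν
    rw [div_le_one (by positivity)]
    nlinarith [sq_nonneg (1 - t)]
  exact le_mul_of_one_le_left (by positivity) this

lemma aux_hess (ν x y a b : ℝ) (hν : ν ≤ 0) (hx : 0 < x) (hy : 0 < y) (hxy : x + y ≤ 1) :
    (x * b - y * a) ^ 2 / (x * y) ≤
      ((2 : ℝ) ^ (2 * ν) * (y / x) ^ (ν - 1) * (1 + y / x) ^ (-2 * ν - 1)) *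
        ((b - y / x * a) ^ 2 / x) := by
  have h := aux_F ν (y / x) hν (by positivity)
  refine le_trans ?_ (mul_le_mul_of_nonneg_right h (by positivity))
  have e : 1 / (y / x * (1 + y / x)) * ((b - y / x * a) ^ 2 / x)
      = (x * b - y * a) ^ 2 / (x * y) / (x + y) := by
    field_simp
  rw [e, le_div_iff₀ (by positivity)]
  exact mul_le_of_le_one_right (by positivity) hxy

lemma aux_sum {n : Type*} [Fintype n] [DecidableEq n] (x e : n → ℝ) (hx : ∀ i, 0 < x i)
    (hx1 : ∑ i, x i = 1) (he : ∑ i, e i = 0) :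
    2 * (∑ i, |e i|) ^ 2 ≤
      ∑ i, ∑ j ∈ univ.erase i, (x i * e j - x j * e i) ^ 2 / (x i * x j) := by
  have h1 : ∀ i, ∑ j ∈ univ.erase i, (x i * e j - x j * e i) ^ 2 / (x i * x j)
      = x i * (∑ j, e j ^ 2 / x j) + e i ^ 2 / x i := by
    intro i
    rw [Finset.sum_erase _ (by simp [mul_comm])]
    have : ∀ j, (x i * e j - x j * e i) ^ 2 / (x i * x j)
        = x i * (e j ^ 2 / x j) - 2 * e i * e j + x j * (e i ^ 2 / x i) := by
      intro j
      have := (hx i).ne'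
      have := (hx j).ne'
      field_simp
      ring
    simp only [this, Finset.sum_add_distrib, Finset.sum_sub_distrib, ← Finset.mul_sum,
      ← Finset.sum_mul, he, hx1]
    ring
  simp only [h1, Finset.sum_add_distrib, ← Finset.sum_mul, hx1]
  have := Finset.sq_sum_div_le_sum_sq_div univ (fun i => |e i|) (g := x) (fun i _ => hx i)
  simp only [hx1, sq_abs, div_one] at this
  linarith

lemma aux_g1 (f : ℝ → ℝ) (hf : ∀ t, 0 < t → HasDerivAt f (deriv f t) t)
    (x y a b s : ℝ) (hx : 0 < x + s * a) (hy : 0 < y + s * b) :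
    HasDerivAt (fun s => (x + s * a) * f ((y + s * b) / (x + s * a)))
      (a * f ((y + s * b) / (x + s * a)) +
        (b - (y + s * b) / (x + s * a) * a) * deriv f ((y + s * b) / (x + s * a))) s := by
  have hX : HasDerivAt (fun s => x + s * a) a s := by
    simpa using ((hasDerivAt_id s).mul_const a).const_add x
  have hY : HasDerivAt (fun s => y + s * b) b s := by
    simpa using ((hasDerivAt_id s).mul_const b).const_add y
  have hT := hY.div hX hx.ne'
  have h := hX.mul ((hf _ (div_pos hy hx)).comp s hT)
  refine h.congr_deriv ?_
  simp only [Function.comp, Pi.div_apply]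
  generalize x + s * a = X at hx ⊢
  generalize y + s * b = Y
  have := hx.ne'
  generalize f (Y / X) = A
  generalize deriv f (Y / X) = B
  field_simp

lemma aux_g2 (f : ℝ → ℝ) (hf : ∀ t, 0 < t → HasDerivAt f (deriv f t) t)
    (hf2 : ∀ t, 0 < t → HasDerivAt (deriv f) (deriv (deriv f) t) t)
    (x y a b s : ℝ) (hx : 0 < x + s * a) (hy : 0 < y + s * b) :
    HasDerivAt (fun s => a * f ((y + s * b) / (x + s * a)) +
        (b - (y + s * b) / (x + s * a) * a) * deriv f ((y + s * b) / (x + s * a)))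
      (deriv (deriv f) ((y + s * b) / (x + s * a)) *
        ((b - (y + s * b) / (x + s * a) * a) ^ 2 / (x + s * a))) s := by
  have hX : HasDerivAt (fun s => x + s * a) a s := by
    simpa using ((hasDerivAt_id s).mul_const a).const_add x
  have hY : HasDerivAt (fun s => y + s * b) b s := by
    simpa using ((hasDerivAt_id s).mul_const b).const_add y
  have hT := hY.div hX hx.ne'
  have h := (((hf _ (div_pos hy hx)).comp s hT).const_mul a).add
    (((hT.mul_const a).const_sub b).mul ((hf2 _ (div_pos hy hx)).comp s hT))
  refine h.congr_deriv ?_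
  simp only [Function.comp, Pi.div_apply]
  generalize x + s * a = X at hx ⊢
  generalize y + s * b = Y
  have := hx.ne'
  generalize f (Y / X) = A
  generalize deriv (deriv f) (Y / X) = C
  generalize deriv f (Y / X) = B
  field_simp
  ring

theorem stmt13 (d : ℕ) (hd : 1 ≤ d) (ν : ℝ) (hν : ν ≤ 0) (f₀ : ℝ → ℝ)
    (hf : ContDiffOn ℝ 2 f₀ (Set.Ioi 0))
    (hf'' : ∀ t : ℝ, 0 < t →
      deriv (deriv f₀) t = (2 : ℝ) ^ (2 * ν) * t ^ (ν - 1) * (1 + t) ^ (-2 * ν - 1))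
    (η q : Fin (d + 1) → ℝ)
    (hη0 : ∀ j, 0 < η j) (hη1 : ∑ j, η j = 1)
    (hq0 : ∀ j, 0 < q j) (hq1 : ∑ j, q j = 1) :
    (∑ i, |η i - q i|) ^ 2 ≤
      Hpw d f₀ q - Hpw d f₀ η -
        ∑ i, (q i - η i) *
          deriv (fun s => Hpw d f₀ (Function.update q i s)) (q i) := by
  have hf1 : ∀ t, 0 < t → HasDerivAt f₀ (deriv f₀ t) t := fun t ht =>
    ((hf.differentiableOn (by norm_num)).differentiableAt (Ioi_mem_nhds ht)).hasDerivAt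
  have hf2 : ∀ t, 0 < t → HasDerivAt (deriv f₀) (deriv (deriv f₀) t) t := by
    intro t ht
    refine (differentiableAt_of_deriv_ne_zero ?_).hasDerivAt
    rw [hf'' t ht]
    have : 0 < 1 + t := by linarith
    positivity
  have hpos : ∀ s ∈ Set.Icc (0:ℝ) 1, ∀ i, 0 < q i + s * (η i - q i) := by
    intro s hs i
    have h1 := hq0 i
    have h2 := hη0 i
    rcases hs with ⟨h3, h4⟩
    rcases h3.eq_or_lt with h | h
    · subst h; linarith
    · nlinarith [mul_pos h h2, mul_nonneg (sub_nonneg.2 h4) h1.le]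
  have hsum : ∀ s, ∑ i, (q i + s * (η i - q i)) = 1 := by
    intro s
    rw [Finset.sum_add_distrib, ← Finset.mul_sum, Finset.sum_sub_distrib, hη1, hq1]; ring
  -- first derivative along the segment
  have hφ1 : ∀ s ∈ Set.Icc (0:ℝ) 1, HasDerivAt
      (fun s => ∑ i, ∑ j ∈ univ.erase i, (q i + s * (η i - q i)) *
        f₀ ((q j + s * (η j - q j)) / (q i + s * (η i - q i)))) _ s := fun s hs =>
    HasDerivAt.fun_sum fun i _ => HasDerivAt.fun_sum fun j _ =>
      aux_g1 f₀ hf1 (q i) (q j) (η i - q i) (η j - q j) s (hpos s hs i) (hpos s hs j)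
  have hφ2 := fun (s : ℝ) (hs : s ∈ Set.Icc (0:ℝ) 1) =>
    HasDerivAt.fun_sum (u := univ) fun (i : Fin (d + 1)) _ =>
      HasDerivAt.fun_sum (u := univ.erase i) fun j _ =>
      aux_g2 f₀ hf1 hf2 (q i) (q j) (η i - q i) (η j - q j) s (hpos s hs i) (hpos s hs j)
  have hmain := aux_taylor _ _ _ ((∑ i, |η i - q i|) ^ 2) hφ1 hφ2 (by
    intro s hs
    refine (aux_sum (fun i => q i + s * (η i - q i)) (fun i => η i - q i) (hpos s hs) (hsum s)
      (by rw [Finset.sum_sub_distrib, hη1, hq1, sub_self])).trans ?_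
    refine Finset.sum_le_sum fun i _ => Finset.sum_le_sum fun j hj => ?_
    rw [hf'' _ (div_pos (hpos s hs j) (hpos s hs i))]
    refine aux_hess ν _ _ _ _ hν (hpos s hs i) (hpos s hs j) ?_
    have hij : i ≠ j := (Finset.ne_of_mem_erase hj).symm
    rw [← hsum s, ← Finset.sum_pair (f := fun i => q i + s * (η i - q i)) hij]
    exact Finset.sum_le_sum_of_subset_of_nonneg (Finset.subset_univ _)
      (fun k _ _ => (hpos s hs k).le))
  have hdiff : DifferentiableAt ℝ (Hpw d f₀) q := by
    unfold Hpw
    refine DifferentiableAt.fun_neg ?_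
    refine DifferentiableAt.fun_sum fun i _ => DifferentiableAt.fun_sum fun j _ => ?_
    refine DifferentiableAt.fun_mul (differentiableAt_apply i q) ?_
    refine DifferentiableAt.fun_comp' (g := f₀) (f := fun q : Fin (d+1) → ℝ => q j / q i) q
      (hf1 _ (div_pos (hq0 j) (hq0 i))).differentiableAt ?_
    simp only [div_eq_mul_inv]
    exact (differentiableAt_apply j q).fun_mul ((differentiableAt_apply i q).fun_inv (hq0 i).ne')
  have hL := hdiff.hasFDerivAt
  set L := fderiv ℝ (Hpw d f₀) q with hLdef
  have hpart : ∀ i, deriv (fun s => Hpw d f₀ (Function.update q i s)) (q i)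
      = L (Pi.single i 1) := by
    intro i
    have h := hasDerivAt_update q i (q i)
    have hL' : HasFDerivAt (Hpw d f₀) L (Function.update q i (q i)) := by simpa using hL
    exact (hL'.comp_hasDerivAt (q i) h).deriv
  have hdir : HasDerivAt (fun s : ℝ => Hpw d f₀ (fun i => q i + s * (η i - q i)))
      (L (fun i => η i - q i)) 0 := by
    have h : HasDerivAt (fun s : ℝ => fun i => q i + s * (η i - q i)) (fun i => η i - q i) 0 := by
      rw [hasDerivAt_pi]
      intro i
      simpa using ((hasDerivAt_id (0:ℝ)).mul_const (η i - q i)).const_add (q i)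
    have hL' : HasFDerivAt (Hpw d f₀) L ((fun s : ℝ => fun i => q i + s * (η i - q i)) 0) := by
      simpa using hL
    exact hL'.comp_hasDerivAt 0 h
  have huniq := hdir.unique ((hφ1 0 (by simp)).neg)
  have hLsum : L (fun i => η i - q i) = -∑ i, (q i - η i) * L (Pi.single i 1) := by
    conv_lhs => rw [pi_eq_sum_univ' (fun i => η i - q i)]
    rw [map_sum, ← Finset.sum_neg_distrib]
    refine Finset.sum_congr rfl fun i _ => ?_
    rw [map_smul, smul_eq_mul]
    have : (fun j => if j = i then (1:ℝ) else 0) = Pi.single i 1 := by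
      ext j; simp [Pi.single_apply]
    try rw [this]
    try ring
  simp only [hpart]
  rw [hLsum] at huniq
  simp only [one_mul, zero_mul, add_zero, add_sub_cancel] at hmain huniq
  unfold Hpw
  linarith
end

section
/- Let m ≥ 2 and β ∈ (0,1). Define H(q) = ‖q‖_β = (Σ_{j=1}^m q_j^β)^{1/β} on the open positive orthant, with partial derivatives ∂_j H(q) = q_j^{β−1} ‖q‖_β^{1−β}. Let κ_β = (1−β) m^{(1−1/β)(2β−1)} 2^{2−2β} if β ∈ [1/2, 1), and κ_β = (1−β) 2^{1/β−1} if β ∈ (0, 1/2]. Then for all η, q ∈ Δ_m with all coordinates positive: ‖q‖_β − ‖η‖_β − Σ_{j=1}^m (q_j − η_j) q_j^{β−1} ‖q‖_β^{1−β} ≥ (κ_β / 2) ( Σ_{j=1}^m |η_j − q_j| )^2. -/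
open Finset

lemma aux_sum_s14 {ι : Type*} (F : Finset ι) (x : ι → ℝ) (hx : ∀ i, 0 < x i) (β : ℝ)
    (h0 : 0 < β) (h1 : β < 1) :
    (∑ i ∈ F, x i ^ (2 - β)) ≤ (∑ i ∈ F, x i) ^ (2 - β) ∧
    (∑ i ∈ F, x i) ^ β ≤ ∑ i ∈ F, x i ^ β := by
  rcases F.eq_empty_or_nonempty with rfl | hF
  · simp [Real.zero_rpow (by linarith : (2 - β) ≠ 0), Real.zero_rpow h0.ne']
  have hp : 0 < ∑ i ∈ F, x i := Finset.sum_pos (fun i _ => hx i) hF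
  have hle : ∀ i ∈ F, x i ≤ ∑ i ∈ F, x i := fun i hi =>
    Finset.single_le_sum (fun j _ => (hx j).le) hi
  set p := ∑ i ∈ F, x i with hpdef
  constructor
  · have e : p ^ (2 - β) = ∑ i ∈ F, x i * p ^ (1 - β) := by
      rw [← Finset.sum_mul, ← hpdef, show (2 - β) = 1 + (1 - β) by ring, Real.rpow_add hp,
        Real.rpow_one]
    rw [e]
    apply Finset.sum_le_sum
    intro i hi
    rw [show (2 - β) = 1 + (1 - β) by ring, Real.rpow_add (hx i), Real.rpow_one]
    exact mul_le_mul_of_nonneg_left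
      (Real.rpow_le_rpow (hx i).le (hle i hi) (by linarith)) (hx i).le
  · have e : p ^ β = ∑ i ∈ F, x i * p ^ (β - 1) := by
      rw [← Finset.sum_mul, ← hpdef]
      nth_rewrite 1 [show β = 1 + (β - 1) by ring]
      rw [Real.rpow_add hp, Real.rpow_one]
    rw [e]
    apply Finset.sum_le_sum
    intro i hi
    nth_rewrite 2 [show β = 1 + (β - 1) by ring]
    rw [Real.rpow_add (hx i), Real.rpow_one]
    exact mul_le_mul_of_nonneg_left
      (Real.rpow_le_rpow_of_nonpos (hx i) (hle i hi) (by linarith)) (hx i).le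

noncomputable def auxC (d : ℕ) (β : ℝ) : ℝ :=
  if (1 / 2 : ℝ) ≤ β then ((d : ℝ) + 1) ^ ((1 - 1 / β) * (2 * β - 1)) * (2 : ℝ) ^ (2 - 2 * β)
  else (2 : ℝ) ^ (1 / β - 1)

lemma auxC_nonneg (d : ℕ) (β : ℝ) : 0 ≤ auxC d β := by
  unfold auxC; split_ifs <;> positivity

/-- the scalar bound -/
lemma aux_scalar (d : ℕ) (β : ℝ) (h0 : 0 < β) (h1 : β < 1) (p n S : ℝ) (hp : 0 ≤ p) (hn : 0 ≤ n)
    (hpn : p + n = 1) (hS : 0 < S) (hDS : p ^ β + n ^ β ≤ S) (hSm : S ≤ ((d : ℝ) + 1) ^ (1 - β)) :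
    auxC d β * (4 * (p * n) ^ (2 - β) * (p ^ β + n ^ β)) ≤ S ^ (1 / β - 1) := by
  have hr : 0 ≤ p * n := mul_nonneg hp hn
  have hr4 : p * n ≤ 1 / 4 := by nlinarith [sq_nonneg (p - n)]
  have hD0 : 0 ≤ p ^ β + n ^ β := by positivity
  unfold auxC
  split_ifs with hb
  · have k1 : (p * n) ^ (2 - β) ≤ (2 : ℝ) ^ (2 * β - 4) := by
      calc (p * n) ^ (2 - β) ≤ (1 / 4 : ℝ) ^ (2 - β) := Real.rpow_le_rpow hr hr4 (by linarith)
        _ = ((2 : ℝ) ^ (-2 : ℝ)) ^ (2 - β) := by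
            congr 1
            rw [Real.rpow_neg (by norm_num)]; norm_num
        _ = _ := by rw [← Real.rpow_mul (by norm_num)]; congr 1; ring
    have k2 : (2 : ℝ) ^ (2 - 2 * β) * (4 * (2 : ℝ) ^ (2 * β - 4)) = 1 := by
      have : (4 : ℝ) = 2 ^ (2 : ℝ) := by norm_num
      rw [this, ← Real.rpow_add (by norm_num), ← Real.rpow_add (by norm_num)]
      ring_nf; simp
    have k3 : ((d : ℝ) + 1) ^ ((1 - 1 / β) * (2 * β - 1)) ≤ S ^ (1 / β - 2) := by
      have hle : (1 / β - 2) ≤ 0 := by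
        have : 1 / β ≤ 2 := by rw [div_le_iff₀ h0]; linarith
        linarith
      calc _ = (((d : ℝ) + 1) ^ (1 - β)) ^ (1 / β - 2) := by
            rw [← Real.rpow_mul (by positivity)]; congr 1; field_simp; ring
        _ ≤ _ := Real.rpow_le_rpow_of_nonpos hS hSm hle
    have k4 : S ^ (1 / β - 1) = S ^ (1 / β - 2) * S := by
      rw [show 1 / β - 1 = (1 / β - 2) + 1 by ring, Real.rpow_add hS, Real.rpow_one]
    rw [k4]
    calc _ ≤ ((d : ℝ) + 1) ^ ((1 - 1 / β) * (2 * β - 1)) * (2 : ℝ) ^ (2 - 2 * β) *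
          (4 * (2 : ℝ) ^ (2 * β - 4) * S) := by gcongr
      _ = ((d : ℝ) + 1) ^ ((1 - 1 / β) * (2 * β - 1)) *
          ((2 : ℝ) ^ (2 - 2 * β) * (4 * (2 : ℝ) ^ (2 * β - 4))) * S := by ring
      _ = ((d : ℝ) + 1) ^ ((1 - 1 / β) * (2 * β - 1)) * S := by rw [k2, mul_one]
      _ ≤ _ := by gcongr
  · push Not at hb
    have hge : 0 ≤ 1 / β - 2 := by
      have : 2 ≤ 1 / β := by rw [le_div_iff₀ h0]; linarith
      linarith
    set D := p ^ β + n ^ β with hD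
    have hDpos : 0 < D := by
      rcases hp.eq_or_lt with h | h
      · have : n = 1 := by linarith
        rw [hD, this, Real.one_rpow]; positivity
      · have := Real.rpow_pos_of_pos h β
        rw [hD]; positivity
    have am : 2 * (p * n) ^ (β / 2) ≤ D := by
      have e1 : (p * n) ^ (β / 2) = p ^ (β / 2) * n ^ (β / 2) := Real.mul_rpow hp hn
      have e2 : ∀ y : ℝ, 0 ≤ y → y ^ β = y ^ (β / 2) * y ^ (β / 2) := by
        intro y hy
        rw [← Real.rpow_add_of_nonneg hy (by linarith) (by linarith)]; congr 1; ring
      rw [hD, e1, e2 p hp, e2 n hn]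
      nlinarith [sq_nonneg (p ^ (β / 2) - n ^ (β / 2))]
    have k1 : (2 : ℝ) ^ (1 / β - 2) * (p * n) ^ (1 / 2 - β) ≤ D ^ (1 / β - 2) := by
      calc _ = (2 * (p * n) ^ (β / 2)) ^ (1 / β - 2) := by
            rw [Real.mul_rpow (x := 2) (by norm_num) (by positivity), ← Real.rpow_mul hr]
            congr 2; field_simp
        _ ≤ _ := Real.rpow_le_rpow (by positivity) am hge
    have k2 : (p * n) ^ (2 - β) ≤ 1 / 8 * (p * n) ^ (1 / 2 - β) := by
      rw [show (2 - β) = 3 / 2 + (1 / 2 - β) by ring,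
        Real.rpow_add_of_nonneg hr (by norm_num) (by linarith)]
      gcongr
      calc (p * n) ^ (3 / 2 : ℝ) ≤ (1 / 4 : ℝ) ^ (3 / 2 : ℝ) :=
            Real.rpow_le_rpow hr hr4 (by norm_num)
        _ = ((1 / 2 : ℝ) ^ (2 : ℝ)) ^ (3 / 2 : ℝ) := by norm_num
        _ = 1 / 8 := by rw [← Real.rpow_mul (by norm_num)]; norm_num
    have k3 : (2 : ℝ) ^ (1 / β - 1) = 2 * (2 : ℝ) ^ (1 / β - 2) := by
      rw [show 1 / β - 1 = 1 + (1 / β - 2) by ring, Real.rpow_add (by norm_num), Real.rpow_one]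
    have k4 : D ^ (1 / β - 1) = D ^ (1 / β - 2) * D := by
      rw [show 1 / β - 1 = (1 / β - 2) + 1 by ring, Real.rpow_add hDpos, Real.rpow_one]
    calc _ ≤ 2 * (2 : ℝ) ^ (1 / β - 2) * (4 * (1 / 8 * (p * n) ^ (1 / 2 - β)) * D) := by
          rw [k3]; gcongr
      _ = ((2 : ℝ) ^ (1 / β - 2) * (p * n) ^ (1 / 2 - β)) * D := by ring
      _ ≤ D ^ (1 / β - 2) * D := by gcongr
      _ = D ^ (1 / β - 1) := k4.symm
      _ ≤ _ := Real.rpow_le_rpow hD0 hDS (by linarith)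

lemma aux_hess_s14 (d : ℕ) (β : ℝ) (h0 : 0 < β) (h1 : β < 1) (x v : Fin (d + 1) → ℝ)
    (hx : ∀ j, 0 < x j) (hx1 : ∑ j, x j = 1) (hv : ∑ j, v j = 0) :
    auxC d β * (∑ j, |v j|) ^ 2 ≤
      (∑ j, x j ^ β) ^ (1 / β - 1) * (∑ j, x j ^ (β - 2) * v j ^ 2) -
      (∑ j, x j ^ β) ^ (1 / β - 2) * (∑ j, x j ^ (β - 1) * v j) ^ 2 := by
  classical
  set S := ∑ j, x j ^ β with hSd
  have hS : 0 < S := Finset.sum_pos (fun i _ => Real.rpow_pos_of_pos (hx i) _) univ_nonempty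
  set A := ∑ j, x j ^ (β - 2) * v j ^ 2 with hA
  set T := ∑ j, x j ^ (β - 1) * v j with hT
  set L := ∑ j, |v j| with hL
  set p := ∑ j with 0 ≤ v j, x j with hp
  set n := ∑ j with ¬ 0 ≤ v j, x j with hn
  have hpn : p + n = 1 := by rw [hp, hn, Finset.sum_filter_add_sum_filter_not, hx1]
  have hp0 : 0 ≤ p := Finset.sum_nonneg (fun i _ => (hx i).le)
  have hn0 : 0 ≤ n := Finset.sum_nonneg (fun i _ => (hx i).le)
  have hP := aux_sum_s14 (univ.filter (fun j => 0 ≤ v j)) x hx β h0 h1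
  have hN := aux_sum_s14 (univ.filter (fun j => ¬ 0 ≤ v j)) x hx β h0 h1
  rw [← hp] at hP
  rw [← hn] at hN
  have hDS : p ^ β + n ^ β ≤ S := by
    rw [hSd, ← Finset.sum_filter_add_sum_filter_not univ (fun j => 0 ≤ v j)]
    exact add_le_add hP.2 hN.2
  have hSm : S ≤ ((d : ℝ) + 1) ^ (1 - β) := by
    have hb : 1 ≤ 1 / β := by rw [le_div_iff₀ h0]; linarith
    have h := Real.rpow_sum_le_const_mul_sum_rpow (univ : Finset (Fin (d+1)))
      (fun j => x j ^ β) hb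
    have e1 : ∀ j, |x j ^ β| = x j ^ β := fun j => abs_of_pos (Real.rpow_pos_of_pos (hx j) _)
    have e2 : ∀ j, (x j ^ β) ^ (1 / β) = x j := fun j => by
      rw [← Real.rpow_mul (hx j).le, mul_one_div_cancel h0.ne', Real.rpow_one]
    simp only [e1, e2, hx1, mul_one, Finset.card_univ, Fintype.card_fin] at h
    rw [← hSd] at h
    push_cast at h
    have h' := Real.rpow_le_rpow (by positivity) h h0.le
    rw [← Real.rpow_mul hS.le, ← Real.rpow_mul (by positivity), one_div_mul_cancel h0.ne',
      Real.rpow_one] at h'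
    convert h' using 2
    field_simp
  set a : Fin (d + 1) → ℝ := fun j => if 0 ≤ v j then 2 * n else -(2 * p) with ha
  set B := ∑ j, a j ^ 2 * x j ^ (2 - β) with hB
  have hB4 : B ≤ 4 * (p * n) ^ (2 - β) * (p ^ β + n ^ β) := by
    have e : B = 4 * n ^ 2 * (∑ j with 0 ≤ v j, x j ^ (2 - β)) +
        4 * p ^ 2 * (∑ j with ¬ 0 ≤ v j, x j ^ (2 - β)) := by
      rw [hB, ← Finset.sum_filter_add_sum_filter_not univ (fun j => 0 ≤ v j), Finset.mul_sum,
        Finset.mul_sum]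
      congr 1
      · apply Finset.sum_congr rfl
        intro j hj
        simp only [Finset.mem_filter, Finset.mem_univ, true_and] at hj
        simp only [ha, if_pos hj]; ring
      · apply Finset.sum_congr rfl
        intro j hj
        simp only [Finset.mem_filter, Finset.mem_univ, true_and] at hj
        simp only [ha, if_neg hj]; ring
    have e2 : ∀ y : ℝ, 0 ≤ y → y ^ 2 = y ^ (2 - β) * y ^ β := by
      intro y hy
      rw [← Real.rpow_add_of_nonneg hy (by linarith) (by linarith), sub_add_cancel]
      norm_num
    calc B ≤ 4 * n ^ 2 * p ^ (2 - β) + 4 * p ^ 2 * n ^ (2 - β) := by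
          rw [e]
          exact add_le_add (mul_le_mul_of_nonneg_left hP.1 (by positivity))
            (mul_le_mul_of_nonneg_left hN.1 (by positivity))
      _ = _ := by rw [e2 n hn0, e2 p hp0, Real.mul_rpow hp0 hn0]; ring
  have key := aux_scalar d β h0 h1 p n S hp0 hn0 hpn hS hDS hSm
  have hax : ∑ j, a j * x j = 0 := by
    have : ∑ j, a j * x j = 2 * n * p + (-(2 * p)) * n := by
      rw [← Finset.sum_filter_add_sum_filter_not univ (fun j => 0 ≤ v j)]
      have e1 : 2 * n * p = ∑ j with 0 ≤ v j, 2 * n * x j := by rw [← Finset.mul_sum]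
      have e2 : -(2 * p) * n = ∑ j with ¬ 0 ≤ v j, -(2 * p) * x j := by rw [← Finset.mul_sum]
      rw [e1, e2]
      congr 1
      · apply Finset.sum_congr rfl
        intro j hj
        simp only [Finset.mem_filter, Finset.mem_univ, true_and] at hj
        simp only [ha, if_pos hj]
      · apply Finset.sum_congr rfl
        intro j hj
        simp only [Finset.mem_filter, Finset.mem_univ, true_and] at hj
        simp only [ha, if_neg hj]
    rw [this]; ring
  have hav : ∑ j, a j * v j = L := by
    have : ∀ j, a j * v j = |v j| + (n - p) * v j := by
      intro j
      simp only [ha]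
      split_ifs with h
      · rw [abs_of_nonneg h]; linear_combination (-v j) * hpn + 2 * v j * hpn 
      · rw [abs_of_neg (not_le.mp h)]; linear_combination (-v j) * hpn
    simp only [this, Finset.sum_add_distrib, ← Finset.mul_sum, hv]
    simp [hL]
  set c := T / S with hc
  have hcs := Finset.sum_sq_le_sum_mul_sum_of_sq_eq_mul (univ : Finset (Fin (d+1)))
    (r := fun j => a j * (v j - c * x j)) (f := fun j => a j ^ 2 * x j ^ (2 - β))
    (g := fun j => x j ^ (β - 2) * (v j - c * x j) ^ 2)
    (fun j _ => mul_nonneg (sq_nonneg _) (Real.rpow_nonneg (hx j).le _))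
    (fun j _ => mul_nonneg (Real.rpow_nonneg (hx j).le _) (sq_nonneg _))
    (fun j _ => by
      have : x j ^ (2 - β) * x j ^ (β - 2) = 1 := by
        rw [← Real.rpow_add (hx j)]; simp
      linear_combination (-(a j * (v j - c * x j)) ^ 2) * this)
  have hl : ∑ j, a j * (v j - c * x j) = L := by
    have : ∀ j, a j * (v j - c * x j) = a j * v j - c * (a j * x j) := fun j => by ring
    simp only [this, Finset.sum_sub_distrib, ← Finset.mul_sum, hax, hav]; ring
  have hg : ∑ j, x j ^ (β - 2) * (v j - c * x j) ^ 2 = A - T ^ 2 / S := by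
    have : ∀ j, x j ^ (β - 2) * (v j - c * x j) ^ 2 =
        x j ^ (β - 2) * v j ^ 2 - 2 * c * (x j ^ (β - 1) * v j) + c ^ 2 * x j ^ β := by
      intro j
      have e1 : x j ^ (β - 1) = x j ^ (β - 2) * x j := by
        rw [show β - 1 = β - 2 + 1 by ring, Real.rpow_add (hx j), Real.rpow_one]
      have e2 : x j ^ β = x j ^ (β - 2) * x j * x j := by
        rw [← e1]
        nth_rewrite 1 [show β = β - 1 + 1 by ring]
        rw [Real.rpow_add (hx j), Real.rpow_one]
      rw [e1, e2]; ring
    simp only [this, Finset.sum_sub_distrib, Finset.sum_add_distrib, ← Finset.mul_sum]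
    rw [← hA, ← hT, ← hSd, hc]
    field_simp; ring
  rw [hl, hg, ← hB] at hcs
  have hW : 0 ≤ A - T ^ 2 / S := by
    rw [← hg]
    exact Finset.sum_nonneg fun j _ => mul_nonneg (Real.rpow_nonneg (hx j).le _) (sq_nonneg _)
  have hC := auxC_nonneg d β
  have e : S ^ (1 / β - 1) * A - S ^ (1 / β - 2) * T ^ 2 = S ^ (1 / β - 1) * (A - T ^ 2 / S) := by
    rw [show 1 / β - 1 = (1 / β - 2) + 1 by ring, Real.rpow_add hS, Real.rpow_one]
    field_simp
  rw [e]
  calc auxC d β * L ^ 2 ≤ auxC d β * (B * (A - T ^ 2 / S)) := by gcongr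
    _ = auxC d β * B * (A - T ^ 2 / S) := by ring
    _ ≤ _ := by
      apply mul_le_mul_of_nonneg_right _ hW
      exact (mul_le_mul_of_nonneg_left hB4 hC).trans key

theorem stmt14 (d : ℕ) (hd : 1 ≤ d) (β : ℝ) (hβ : β ∈ Set.Ioo (0 : ℝ) 1)
    (η q : Fin (d + 1) → ℝ)
    (hη0 : ∀ j, 0 < η j) (hη1 : ∑ j, η j = 1)
    (hq0 : ∀ j, 0 < q j) (hq1 : ∑ j, q j = 1) :
    -- κ_β/2 · ‖η - q‖₁² ≤ Bregman divergence of -‖·‖_β from q to η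
    ((if (1 / 2 : ℝ) ≤ β then
        (1 - β) * ((d : ℝ) + 1) ^ ((1 - 1 / β) * (2 * β - 1)) * (2 : ℝ) ^ (2 - 2 * β)
      else (1 - β) * (2 : ℝ) ^ (1 / β - 1)) / 2) * (∑ j, |η j - q j|) ^ 2 ≤
      (∑ j, q j ^ β) ^ (1 / β) - (∑ j, η j ^ β) ^ (1 / β) -
        ∑ j, (q j - η j) *
          (q j ^ (β - 1) * ((∑ k, q k ^ β) ^ (1 / β)) ^ (1 - β)) := by
  obtain ⟨h0, h1⟩ := hβ
  have hκ : (if (1 / 2 : ℝ) ≤ β then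
        (1 - β) * ((d : ℝ) + 1) ^ ((1 - 1 / β) * (2 * β - 1)) * (2 : ℝ) ^ (2 - 2 * β)
      else (1 - β) * (2 : ℝ) ^ (1 / β - 1)) = (1 - β) * auxC d β := by
    unfold auxC; split_ifs <;> ring
  rw [hκ]
  set v : Fin (d + 1) → ℝ := fun j => η j - q j with hv
  have hv0 : ∑ j, v j = 0 := by simp [hv, Finset.sum_sub_distrib, hη1, hq1]
  set K := (1 - β) * auxC d β * (∑ j, |v j|) ^ 2 with hK
  let x : ℝ → Fin (d + 1) → ℝ := fun t j => q j + t * v j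
  have hxpos : ∀ t ∈ Set.Icc (0 : ℝ) 1, ∀ j, 0 < x t j := by
    intro t ht j
    have e : x t j = (1 - t) * q j + t * η j := by simp only [x, hv]; ring
    rw [e]
    rcases ht.1.eq_or_lt with h | h
    · rw [← h]; simpa using hq0 j
    · have := mul_pos h (hη0 j)
      have := mul_nonneg (sub_nonneg.2 ht.2) (hq0 j).le
      linarith
  have hxsum : ∀ t, ∑ j, x t j = 1 := by
    intro t; simp only [x, Finset.sum_add_distrib, ← Finset.mul_sum, hv0, hq1]; simp
  let S : ℝ → ℝ := fun t => ∑ j, x t j ^ β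
  let T : ℝ → ℝ := fun t => ∑ j, x t j ^ (β - 1) * v j
  let A : ℝ → ℝ := fun t => ∑ j, x t j ^ (β - 2) * v j ^ 2
  have hSpos : ∀ t ∈ Set.Icc (0 : ℝ) 1, 0 < S t := fun t ht =>
    Finset.sum_pos (fun i _ => Real.rpow_pos_of_pos (hxpos t ht i) _) univ_nonempty
  have dx : ∀ t j, HasDerivAt (fun t => x t j) (v j) t := by
    intro t j
    exact (((hasDerivAt_id' t).mul_const (v j)).const_add (q j)).congr_deriv (one_mul _)
  have dS : ∀ t ∈ Set.Icc (0 : ℝ) 1, HasDerivAt S (β * T t) t := by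
    intro t ht
    have := HasDerivAt.fun_sum (u := univ) (fun j _ =>
      (dx t j).rpow_const (p := β) (Or.inl (hxpos t ht j).ne'))
    refine this.congr_deriv ?_
    simp only [T, Finset.mul_sum]
    exact Finset.sum_congr rfl fun j _ => by ring
  have dT : ∀ t ∈ Set.Icc (0 : ℝ) 1, HasDerivAt T ((β - 1) * A t) t := by
    intro t ht
    have := HasDerivAt.fun_sum (u := univ) (fun j _ =>
      ((dx t j).rpow_const (p := β - 1) (Or.inl (hxpos t ht j).ne')).mul_const (v j))
    refine this.congr_deriv ?_
    simp only [A, Finset.mul_sum]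
    refine Finset.sum_congr rfl fun j _ => ?_
    rw [show β - 1 - 1 = β - 2 by ring]; ring
  let f : ℝ → ℝ := fun t => -(S t) ^ (1 / β) - K / 2 * t ^ 2
  let f' : ℝ → ℝ := fun t => -(T t * (S t) ^ (1 / β - 1)) - K * t
  let f'' : ℝ → ℝ := fun t => (1 - β) * ((S t) ^ (1 / β - 1) * A t -
    (S t) ^ (1 / β - 2) * T t ^ 2) - K
  have df : ∀ t ∈ Set.Icc (0 : ℝ) 1, HasDerivAt f (f' t) t := by
    intro t ht
    have := (((dS t ht).rpow_const (p := 1 / β) (Or.inl (hSpos t ht).ne')).fun_neg).fun_sub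
      ((hasDerivAt_pow 2 t).const_mul (K / 2))
    refine this.congr_deriv ?_
    simp only [f']
    field_simp
    norm_num
    ring
  have df' : ∀ t ∈ Set.Icc (0 : ℝ) 1, HasDerivAt f' (f'' t) t := by
    intro t ht
    have := (((dT t ht).fun_mul ((dS t ht).rpow_const (p := 1 / β - 1)
      (Or.inl (hSpos t ht).ne'))).fun_neg).fun_sub ((hasDerivAt_id' t).const_mul K)
    refine this.congr_deriv ?_
    simp only [f'']
    rw [show 1 / β - 1 - 1 = 1 / β - 2 by ring]
    have hb : β * (1 / β) = 1 := mul_one_div_cancel h0.ne'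
    linear_combination (-(T t ^ 2 * S t ^ (1 / β - 2))) * hb
  have hconv : ConvexOn ℝ (Set.Icc (0 : ℝ) 1) f := by
    refine convexOn_of_hasDerivWithinAt2_nonneg (f' := f') (f'' := f'') (convex_Icc 0 1)
      (fun t ht => (df t ht).continuousAt.continuousWithinAt)
      (fun t ht => (df t (interior_subset ht)).hasDerivWithinAt)
      (fun t ht => (df' t (interior_subset ht)).hasDerivWithinAt) ?_
    intro t ht
    have ht := interior_subset ht
    have := aux_hess_s14 d β h0 h1 (x t) v (hxpos t ht) (hxsum t) hv0
    have h := mul_le_mul_of_nonneg_left this (by linarith : 0 ≤ 1 - β)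
    simp only [f'', hK, S, A, T]
    linarith
  have h01 : (0 : ℝ) ∈ Set.Icc (0 : ℝ) 1 := by simp
  have h11 : (1 : ℝ) ∈ Set.Icc (0 : ℝ) 1 := by simp
  have hs := hconv.le_slope_of_hasDerivAt h01 h11 one_pos (df 0 h01)
  rw [slope_def_field] at hs
  have hx0 : ∀ j, x 0 j = q j := fun j => by simp [x]
  have hx1' : ∀ j, x 1 j = η j := fun j => by simp [x, hv]
  simp only [f, f', S, T, hx0, hx1'] at hs
  have hS0 := hSpos 0 h01
  simp only [S, hx0] at hS0
  have e : ∑ j, (q j - η j) * (q j ^ (β - 1) * ((∑ k, q k ^ β) ^ (1 / β)) ^ (1 - β)) =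
      -((∑ j, q j ^ (β - 1) * v j) * (∑ k, q k ^ β) ^ (1 / β - 1)) := by
    rw [← Real.rpow_mul hS0.le, show 1 / β * (1 - β) = 1 / β - 1 by field_simp, Finset.sum_mul,
      ← Finset.sum_neg_distrib]
    exact Finset.sum_congr rfl fun j _ => by simp only [hv]; ring
  rw [e]
  have hK2 : (1 - β) * auxC d β / 2 * (∑ j, |v j|) ^ 2 = K / 2 := by rw [hK]; ring
  have hK3 : (1 - β) * auxC d β / 2 * (∑ j, |η j - q j|) ^ 2 = K / 2 := hK2
  rw [hK3]
  norm_num at hs ⊢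
  linarith
end

section
/- Let m ≥ 2, let A be a nonempty set, let L : {1,…,m} × A → ℝ be a loss, and let C = (c_{jk}) be a cost matrix with row maxima c_{jM} = max_{k} c_{jk}. Define the cost-transformed loss L̃(j, γ) = c_{jM} L(j, γ) + Σ_{k≠j} (c_{jM} − c_{jk}) (L(k, γ) − 1), the vector η̃ ∈ ℝ^m with η̃_j = c_{jM} η_j + Σ_{k≠j} (c_{kM} − c_{kj}) η_k, and D(η) = Σ_{j=1}^m Σ_{k≠j} η_j (c_{jM} − c_{jk}). Then for every η ∈ Δ_m: (a) η̃_j ≥ 0 for all j and Σ_{j=1}^m η̃_j > 0, so p := η̃ / (Σ_j η̃_j) ∈ Δ_m; (b) for every γ ∈ A, Σ_{j=1}^m η_j L̃(j, γ) = Σ_{j=1}^m η̃_j L(j, γ) − D(η); (c) if the infimum H_L(p) := inf_{γ'} Σ_j p_j L(j, γ') is finite, then for every γ ∈ A, Σ_j η_j L̃(j, γ) − inf_{γ'} Σ_j η_j L̃(j, γ') = (Σ_j η̃_j) · ( Σ_j p_j L(j, γ) − H_L(p) ). -/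
open Finset

/-- Row maxima `c_{jM} = max_k c_{jk}`. -/
noncomputable def cM (d : ℕ) (C : Fin (d + 1) → Fin (d + 1) → ℝ)
    (j : Fin (d + 1)) : ℝ :=
  ⨆ k, C j k

/-- The cost-transformed loss
`L̃(j,γ) = c_{jM} L(j,γ) + Σ_{k≠j} (c_{jM} - c_{jk})(L(k,γ) - 1)`. -/
noncomputable def Ltil {A : Type} (d : ℕ) (C : Fin (d + 1) → Fin (d + 1) → ℝ)
    (L : Fin (d + 1) → A → ℝ) (j : Fin (d + 1)) (γ : A) : ℝ :=
  cM d C j * L j γ +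
    ∑ k ∈ Finset.univ.erase j, (cM d C j - C j k) * (L k γ - 1)

/-- `η̃_j = c_{jM} η_j + Σ_{k≠j} (c_{kM} - c_{kj}) η_k`. -/
noncomputable def etaTil (d : ℕ) (C : Fin (d + 1) → Fin (d + 1) → ℝ)
    (η : Fin (d + 1) → ℝ) (j : Fin (d + 1)) : ℝ :=
  cM d C j * η j + ∑ k ∈ Finset.univ.erase j, (cM d C k - C k j) * η k

/-- `D(η) = Σ_j Σ_{k≠j} η_j (c_{jM} - c_{jk})`. -/
noncomputable def Dcw (d : ℕ) (C : Fin (d + 1) → Fin (d + 1) → ℝ)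
    (η : Fin (d + 1) → ℝ) : ℝ :=
  ∑ j, ∑ k ∈ Finset.univ.erase j, η j * (cM d C j - C j k)

theorem aux_eta (d : ℕ) (C : Fin (d + 1) → Fin (d + 1) → ℝ)
    (hC0 : ∀ j, C j j = 0) (η : Fin (d + 1) → ℝ) (j : Fin (d + 1)) :
    etaTil d C η j = ∑ k, (cM d C k - C k j) * η k := by
  unfold etaTil
  rw [← Finset.add_sum_erase Finset.univ _ (Finset.mem_univ j), hC0, sub_zero]

theorem aux_risk {A : Type} (d : ℕ) (L : Fin (d + 1) → A → ℝ)
    (C : Fin (d + 1) → Fin (d + 1) → ℝ)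
    (hC0 : ∀ j, C j j = 0) (η : Fin (d + 1) → ℝ) (γ : A) :
    ∑ j, η j * Ltil d C L j γ = ∑ j, etaTil d C η j * L j γ - Dcw d C η := by
  have h1 : ∀ j, η j * Ltil d C L j γ
      = ∑ k, (cM d C j - C j k) * η j * L k γ
        - ∑ k ∈ Finset.univ.erase j, η j * (cM d C j - C j k) := by
    intro j
    unfold Ltil
    rw [← Finset.add_sum_erase Finset.univ _ (Finset.mem_univ j), hC0, sub_zero,
      add_sub_assoc, ← Finset.sum_sub_distrib, mul_add, Finset.mul_sum]
    congr 1
    · ring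
    · exact Finset.sum_congr rfl fun k _ => by ring
  simp_rw [h1, Finset.sum_sub_distrib, aux_eta d C hC0, Finset.sum_mul]
  rw [Finset.sum_comm]
  rfl

theorem stmt15 (d : ℕ) (hd : 1 ≤ d) (A : Type) [Nonempty A]
    (L : Fin (d + 1) → A → ℝ) (C : Fin (d + 1) → Fin (d + 1) → ℝ)
    (hC0 : ∀ j, C j j = 0) (hCnn : ∀ j k, 0 ≤ C j k)
    (hCpos : ∀ j, ∃ k, k ≠ j ∧ 0 < C j k)
    (η : Fin (d + 1) → ℝ) (hη0 : ∀ j, 0 ≤ η j) (hη1 : ∑ j, η j = 1) :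
    -- (a) η̃ is nonnegative with positive total mass, so p := η̃/(Σ η̃) ∈ Δ_m
    ((∀ j, 0 ≤ etaTil d C η j) ∧ 0 < ∑ j, etaTil d C η j ∧
      (∀ j, 0 ≤ etaTil d C η j / ∑ k, etaTil d C η k) ∧
      ∑ j, etaTil d C η j / ∑ k, etaTil d C η k = 1)
    ∧
    -- (b) risk identity
    (∀ γ : A, ∑ j, η j * Ltil d C L j γ =
      ∑ j, etaTil d C η j * L j γ - Dcw d C η)
    ∧
    -- (c) regret identity: if H_L(p) is finite (p = η̃/(Σ η̃)), then
    -- B_{L̃}(η,γ) = (Σ η̃) · B_L(p,γ)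
    (∀ c : ℝ,
      IsGLB {x : ℝ | ∃ γ : A,
          x = ∑ j, (etaTil d C η j / ∑ k, etaTil d C η k) * L j γ} c →
      IsGLB {x : ℝ | ∃ γ : A, x = ∑ j, η j * Ltil d C L j γ}
          ((∑ j, etaTil d C η j) * c - Dcw d C η) ∧
        ∀ γ : A,
          ∑ j, η j * Ltil d C L j γ - ((∑ j, etaTil d C η j) * c - Dcw d C η) =
            (∑ j, etaTil d C η j) *
              (∑ j, (etaTil d C η j / ∑ k, etaTil d C η k) * L j γ - c)) := by
  have hle : ∀ j k, C j k ≤ cM d C j := fun j k =>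
    le_ciSup (f := fun k => C j k) (Set.finite_range _).bddAbove k
  have hcpos : ∀ j, 0 < cM d C j := fun j => by
    obtain ⟨k, _, hk⟩ := hCpos j
    exact hk.trans_le (hle j k)
  have hnn : ∀ j, 0 ≤ etaTil d C η j := fun j => by
    rw [aux_eta d C hC0]
    exact Finset.sum_nonneg fun k _ => mul_nonneg (sub_nonneg.2 (hle k j)) (hη0 k)
  have hpos : 0 < ∑ j, etaTil d C η j := by
    obtain ⟨i, hi⟩ : ∃ i, 0 < η i := by
      by_contra! h
      have := Finset.sum_nonpos (s := Finset.univ) fun i _ => h i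
      linarith
    refine Finset.sum_pos' (fun j _ => hnn j) ⟨i, Finset.mem_univ i, ?_⟩
    unfold etaTil
    exact add_pos_of_pos_of_nonneg (mul_pos (hcpos i) hi)
      (Finset.sum_nonneg fun k _ => mul_nonneg (sub_nonneg.2 (hle k i)) (hη0 k))
  have hb := aux_risk d L C hC0 η
  have hp : ∀ γ, ∑ j, etaTil d C η j * L j γ = (∑ j, etaTil d C η j) *
      ∑ j, (etaTil d C η j / ∑ k, etaTil d C η k) * L j γ := fun γ => by
    rw [Finset.mul_sum]
    refine Finset.sum_congr rfl fun j _ => ?_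
    rw [← mul_assoc, mul_div_cancel₀ _ hpos.ne']
  refine ⟨⟨hnn, hpos, fun j => div_nonneg (hnn j) hpos.le, ?_⟩, hb, ?_⟩
  · rw [← Finset.sum_div, div_self hpos.ne']
  · intro c hc
    refine ⟨⟨?_, ?_⟩, fun γ => by rw [hb, hp]; ring⟩
    · rintro x ⟨γ, rfl⟩
      rw [hb, hp]
      have := mul_le_mul_of_nonneg_left (hc.1 ⟨γ, rfl⟩) hpos.le
      linarith
    · intro y hy
      have : (y + Dcw d C η) / (∑ j, etaTil d C η j) ≤ c := by
        refine hc.2 ?_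
        rintro x ⟨γ, rfl⟩
        have h := hy ⟨γ, rfl⟩
        rw [hb, hp] at h
        rw [div_le_iff₀' hpos]
        linarith
      rw [div_le_iff₀' hpos] at this
      linarith
end

section
/- Let m ≥ 2 and let C = (c_{jk}) be a cost matrix with row maxima c_{jM} = max_k c_{jk}. Define C̄ ∈ ℝ^{m×m} by C̄_{jk} = c_{jM} − c_{jk}, and for v ∈ ℝ^m write (C̄^T v)_k = Σ_{j=1}^m v_j (c_{jM} − c_{jk}). Then for all η, q ∈ Δ_m and every index k ∈ {1,…,m} with (C̄^T q)_k = max_{j∈{1,…,m}} (C̄^T q)_j: Σ_{j=1}^m η_j c_{jk} − min_{l∈{1,…,m}} Σ_{j=1}^m η_j c_{jl} ≤ ‖C̄^T(η − q)‖_{∞2}. -/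
open Finset

/-- `‖b‖_{∞2} = max_{j≠k} (|b_j| + |b_k|)`. -/
noncomputable def norminf2 (m : ℕ) (b : Fin m → ℝ) : ℝ :=
  sSup {x : ℝ | ∃ j k : Fin m, j ≠ k ∧ x = |b j| + |b k|}

/-- `(C̄ᵀ v)_k = Σ_j v_j (c_{jM} - c_{jk})`. -/
noncomputable def CbarT (d : ℕ) (C : Fin (d + 1) → Fin (d + 1) → ℝ)
    (v : Fin (d + 1) → ℝ) (k : Fin (d + 1)) : ℝ :=
  ∑ j, v j * (cM d C j - C j k)

theorem stmt17 (d : ℕ) (hd : 1 ≤ d) (C : Fin (d + 1) → Fin (d + 1) → ℝ)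
    (hC0 : ∀ j, C j j = 0) (hCnn : ∀ j k, 0 ≤ C j k)
    (hCpos : ∀ j, ∃ k, k ≠ j ∧ 0 < C j k)
    (η q : Fin (d + 1) → ℝ)
    (hη0 : ∀ j, 0 ≤ η j) (hη1 : ∑ j, η j = 1)
    (hq0 : ∀ j, 0 ≤ q j) (hq1 : ∑ j, q j = 1)
    (k : Fin (d + 1)) (hk : ∀ j, CbarT d C q j ≤ CbarT d C q k) :
    ∑ j, η j * C j k - ⨅ l, ∑ j, η j * C j l ≤
      norminf2 (d + 1) (CbarT d C (fun j => η j - q j)) := by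
  obtain ⟨l, hl⟩ := exists_eq_ciInf_of_finite (f := fun l => ∑ j, η j * C j l)
  rw [← hl]
  have hfin : {x : ℝ | ∃ j k : Fin (d + 1), j ≠ k ∧
      x = |CbarT d C (fun j => η j - q j) j| + |CbarT d C (fun j => η j - q j) k|}.Finite := by
    refine (Set.finite_range (fun p : Fin (d + 1) × Fin (d + 1) =>
      |CbarT d C (fun j => η j - q j) p.1| + |CbarT d C (fun j => η j - q j) p.2|)).subset ?_
    rintro x ⟨a, b, _, rfl⟩
    exact ⟨(a, b), rfl⟩
  have hsub : ∀ i, CbarT d C (fun j => η j - q j) i = CbarT d C η i - CbarT d C q i := by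
    intro i
    simp only [CbarT, sub_mul, Finset.sum_sub_distrib]
  have hη : ∀ i, CbarT d C η i = ∑ j, η j * cM d C j - ∑ j, η j * C j i := by
    intro i
    simp only [CbarT, mul_sub, Finset.sum_sub_distrib]
  by_cases hlk : l = k
  · subst hlk
    simp only [sub_self]
    refine Real.sSup_nonneg ?_
    rintro x ⟨a, b, _, rfl⟩
    positivity
  · refine le_trans ?_ (le_csSup hfin.bddAbove ⟨l, k, hlk, rfl⟩)
    have h1 := le_abs_self (CbarT d C (fun j => η j - q j) l)
    have h2 := neg_abs_le (CbarT d C (fun j => η j - q j) k)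
    have h3 := hsub l
    have h4 := hsub k
    have h5 := hη l
    have h6 := hη k
    have h7 := hk l
    show ∑ j, η j * C j k - ∑ j, η j * C j l ≤ _
    linarith
end

section
/- Let m ≥ 2 and let η, q ∈ Δ_m with η_j > 0 and q_j > 0 for all j. Then for every index k ∈ {1,…,m} with q_k = max_{j∈{1,…,m}} q_j: (1/2) · ( max_{j∈{1,…,m}} η_j − η_k )^2 ≤ Σ_{j=1}^m η_j log(η_j / q_j). That is, the zero-one classification regret of the prediction q at η is controlled by the Kullback–Leibler regret of the multinomial likelihood loss. -/
open Finset

lemma kl_aux {n : ℕ} (η q f : Fin n → ℝ) (c : ℝ)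
    (hη0 : ∀ j, 0 < η j) (hη1 : ∑ j, η j = 1) (hq0 : ∀ j, 0 < q j)
    (h : ∑ j, q j * Real.exp (f j) ≤ Real.exp c) :
    ∑ j, η j * f j - c ≤ ∑ j, η j * Real.log (η j / q j) := by
  have key : ∀ j, η j * f j - η j * c + η j - q j * Real.exp (f j) * Real.exp (-c)
      ≤ η j * Real.log (η j / q j) := by
    intro j
    have hp := hη0 j
    have hq := hq0 j
    have hx : 0 < q j * Real.exp (f j) * Real.exp (-c) / η j := by positivity
    have h1 := Real.log_le_sub_one_of_pos hx
    rw [Real.log_div (by positivity) hp.ne', Real.log_mul (by positivity) (by positivity),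
      Real.log_mul hq.ne' (by positivity), Real.log_exp, Real.log_exp] at h1
    rw [Real.log_div hp.ne' hq.ne']
    have h2 := mul_le_mul_of_nonneg_left h1 hp.le
    rw [mul_sub (η j) (_ / _), mul_div_cancel₀ _ hp.ne'] at h2
    linarith
  have hs := Finset.sum_le_sum (fun j (_ : j ∈ Finset.univ) => key j)
  rw [Finset.sum_sub_distrib, Finset.sum_add_distrib, Finset.sum_sub_distrib,
    ← Finset.sum_mul, ← Finset.sum_mul, hη1] at hs
  have h3 : (∑ j, q j * Real.exp (f j)) * Real.exp (-c) ≤ 1 := by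
    calc _ ≤ Real.exp c * Real.exp (-c) := by gcongr
      _ = 1 := by rw [← Real.exp_add]; simp
  linarith

theorem stmt18 (d : ℕ) (hd : 1 ≤ d) (η q : Fin (d + 1) → ℝ)
    (hη0 : ∀ j, 0 < η j) (hη1 : ∑ j, η j = 1)
    (hq0 : ∀ j, 0 < q j) (hq1 : ∑ j, q j = 1)
    (k : Fin (d + 1)) (hk : ∀ j, q j ≤ q k) :
    (1 / 2 : ℝ) * ((⨆ j, η j) - η k) ^ 2 ≤
      ∑ j, η j * Real.log (η j / q j) := by
  obtain ⟨i, hi⟩ := exists_eq_ciSup_of_finite (f := η)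
  have hik : η k ≤ η i := by
    rw [hi]; exact le_ciSup (Set.finite_range η).bddAbove k
  rw [← hi]
  by_cases hne : i = k
  · subst hne
    have := kl_aux η q (fun _ => 0) 0 hη0 hη1 hq0 (by simp [hq1])
    simpa using this
  obtain ⟨t, ht⟩ : ∃ t, t = η i - η k := ⟨_, rfl⟩
  have ht0 : 0 ≤ t := by linarith
  have split : ∀ g : Fin (d + 1) → ℝ, ∑ j, g j =
      g i + (g k + ∑ j ∈ (univ.erase i).erase k, g j) := by
    intro g
    rw [Finset.add_sum_erase _ _ (by simp [Ne.symm hne]), Finset.add_sum_erase _ _ (by simp)]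
  have hrest : ∀ j ∈ (univ.erase i).erase k, j ≠ k ∧ j ≠ i := by
    intro j hj; simpa using hj
  have main := kl_aux η q (fun j => if j = i then t else if j = k then -t else 0) (t ^ 2 / 2)
    hη0 hη1 hq0 (by
      rw [split, Finset.sum_congr rfl (g := q) (by
        intro j hj; obtain ⟨h1, h2⟩ := hrest j hj; simp [h1, h2])]
      simp only [if_true, if_neg (Ne.symm hne)]
      have hs := split q
      rw [hq1] at hs
      have hnn : 0 ≤ ∑ j ∈ (univ.erase i).erase k, q j := Finset.sum_nonneg fun j _ => (hq0 j).le
      have hc := Real.cosh_le_exp_half_sq t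
      have h1 := Real.one_le_cosh t
      rw [Real.cosh_eq] at hc h1
      have he : Real.exp (-t) ≤ 1 := Real.exp_le_one_iff.2 (by linarith)
      have hki := hk i
      have hhalf : q i ≤ 1 / 2 := by linarith
      nlinarith [mul_nonneg (sub_nonneg.2 hki) (sub_nonneg.2 he),
        mul_nonneg (sub_nonneg.2 hhalf) (sub_nonneg.2 h1)])
  rw [split, Finset.sum_congr rfl (g := fun _ => (0 : ℝ)) (by
        intro j hj; obtain ⟨h1, h2⟩ := hrest j hj; simp [h1, h2])] at main
  simp only [if_true, if_neg (Ne.symm hne), Finset.sum_const_zero] at main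
  rw [← ht]
  have : η i * t + (η k * -t + 0) = t ^ 2 := by rw [ht]; ring
  linarith
end

section
/- Let n ≥ 1, let Ω ⊆ ℝ^n be a convex set, let ψ : Ω → ℝ, and let g : Ω → ℝ^n satisfy the subgradient inequality ψ(b) ≥ ψ(a) + ⟨g(a), b − a⟩ for all a, b ∈ Ω. Define the Bregman divergence B(x, y) = ψ(x) − ψ(y) − ⟨g(y), x − y⟩ for x, y ∈ Ω. Then for all x, y ∈ Ω and every w ∈ [0,1], setting x^w = (1−w)x + wy (which lies in Ω): B(x, y) ≥ B(x^w, y) and B(x, y) ≥ B(x, x^w). -/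
open Finset

/-- The Bregman divergence `B(x,y) = ψ(x) - ψ(y) - ⟨g(y), x - y⟩` associated
with `ψ` and a subgradient selection `g`. -/
noncomputable def Breg (n : ℕ) (ψ : (Fin n → ℝ) → ℝ)
    (g : (Fin n → ℝ) → Fin n → ℝ) (x y : Fin n → ℝ) : ℝ :=
  ψ x - ψ y - ∑ i, g y i * (x i - y i)

theorem stmt19 (n : ℕ) (hn : 1 ≤ n) (Ω : Set (Fin n → ℝ)) (hΩ : Convex ℝ Ω)
    (ψ : (Fin n → ℝ) → ℝ) (g : (Fin n → ℝ) → Fin n → ℝ)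
    (hg : ∀ a ∈ Ω, ∀ b ∈ Ω, ψ a + ∑ i, g a i * (b i - a i) ≤ ψ b)
    (x : Fin n → ℝ) (hx : x ∈ Ω) (y : Fin n → ℝ) (hy : y ∈ Ω)
    (w : ℝ) (hw : w ∈ Set.Icc (0 : ℝ) 1) :
    ((1 - w) • x + w • y) ∈ Ω ∧
    Breg n ψ g ((1 - w) • x + w • y) y ≤ Breg n ψ g x y ∧
    Breg n ψ g x ((1 - w) • x + w • y) ≤ Breg n ψ g x y := by
  obtain ⟨h0, h1⟩ := hw
  have hz : ((1 - w) • x + w • y) ∈ Ω := hΩ hx hy (by linarith) h0 (by ring)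
  refine ⟨hz, ?_⟩
  rcases eq_or_lt_of_le h1 with h | h
  · subst h
    have e : ((1 - (1 : ℝ)) • x + (1 : ℝ) • y) = y := by simp
    rw [e]
    refine ⟨?_, le_refl _⟩
    have := hg y hy x hx
    simp only [Breg, sub_self, mul_zero, Finset.sum_const_zero]
    linarith
  · have zx := hg _ hz x hx
    have zy := hg _ hz y hy
    have yz := hg y hy _ hz
    unfold Breg
    have e1 : ∀ v : Fin n → ℝ, ∑ i, v i * (((1 - w) • x + w • y) i - y i)
        = (1 - w) * ∑ i, v i * (x i - y i) := by
      intro v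
      rw [Finset.mul_sum]
      refine Finset.sum_congr rfl fun i _ => ?_
      simp only [Pi.add_apply, Pi.smul_apply, smul_eq_mul]
      ring
    have e2 : ∀ v : Fin n → ℝ, ∑ i, v i * (x i - ((1 - w) • x + w • y) i)
        = w * ∑ i, v i * (x i - y i) := by
      intro v
      rw [Finset.mul_sum]
      refine Finset.sum_congr rfl fun i _ => ?_
      simp only [Pi.add_apply, Pi.smul_apply, smul_eq_mul]
      ring
    have e3 : ∀ v : Fin n → ℝ, ∑ i, v i * (y i - ((1 - w) • x + w • y) i)
        = -((1 - w) * ∑ i, v i * (x i - y i)) := by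
      intro v
      rw [← e1, ← Finset.sum_neg_distrib]
      refine Finset.sum_congr rfl fun i _ => ?_
      ring
    rw [e2] at zx
    rw [e3] at zy
    rw [e1] at yz
    rw [e1, e2]
    generalize (1 - w) • x + w • y = z at *
    generalize ∑ i, g y i * (x i - y i) = P at *
    generalize ∑ i, g z i * (x i - y i) = Q at *
    have hPQ : P ≤ Q := le_of_mul_le_mul_left (by linarith) (sub_pos.2 h)
    have hw' := mul_le_mul_of_nonneg_left hPQ h0
    constructor <;> nlinarith
end
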